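/- One-shot Chong–Motani–Garg–El Gamal inner bound. Let 0 < ε < 1 and set L := log₂(1/ε). Let Q, U₁, 𝒳₁, U₂, 𝒳₂ be finite sets and let p(q)·p(u₁,x₁|q)·p(u₂,x₂|q) be a joint probability distribution on Q × U₁ × 𝒳₁ × U₂ × 𝒳₂. For each (x₁,x₂) let ρ_{x₁,x₂} be a density matrix on ℂ^{d₁} ⊗ ℂ^{d₂}. Let ρ^{QU₁X₁U₂X₂Y₁Y₂} := Σ p(q)p(u₁,x₁|q)p(u₂,x₂|q) |q,u₁,x₁,u₂,x₂⟩⟨q,u₁,x₁,u₂,x₂| ⊗ ρ_{x₁,x₂} be the associated cq-state, with respect to which all information quantities below are computed (Y₁ obtained by tracing out ℂ^{d₂}, Y₂ by tracing out ℂ^{d₁}). Let N₁, N₂ be positive integers and set R₁ := log₂ N₁, R₂ := log₂ N₂. Suppose: R₁ ≤ I_H^ε(X₁ : Y₁ | U₂Q) − 2 − L; R₁ ≤ I_H^ε(X₁ : Y₁ | U₁U₂Q) + I_H^ε(X₂U₁ : Y₂ | U₂Q) − 2 − L; R₂ ≤ I_H^ε(X₂ : Y₂ | U₁Q) − 2 −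 L; R₂ ≤ I_H^ε(X₂ : Y₂ | U₁U₂Q) + I_H^ε(X₁U₂ : Y₁ | U₁Q) − 2 − L; R₁ + R₂ ≤ I_H^ε(X₁U₂ : Y₁ | Q) + I_H^ε(X₂ : Y₂ | U₁U₂Q) − 2 − L; R₁ + R₂ ≤ I_H^ε(X₂U₁ : Y₂ | Q) + I_H^ε(X₁ : Y₁ | U₁U₂Q) − 2 − L; R₁ + R₂ ≤ I_H^ε(X₁U₂ : Y₁ | U₁Q) + I_H^ε(X₂U₁ : Y₂ | U₂Q) − 2 − L; 2R₁ + R₂ ≤ I_H^ε(X₁U₂ : Y₁ | Q) + I_H^ε(X₁ : Y₁ | U₁U₂Q) + I_H^ε(X₂U₁ : Y₂ | U₂Q) − 2 − L; R₁ + 2R₂ ≤ I_H^ε(X₂U₁ : Y₂ | Q) + I_H^ε(X₂ : Y₂ | U₁U₂Q) + I_H^ε(X₁U₂ : Y₁ | U₁Q) − 2 − L. Then there exists an (N₁, N₂, 2^{2^{14}}·ε^{1/6}) interference-channel code for the family {ρ_{x₁,x₂}}. -/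

import Mathlib

/-!
# Idea of the proof

Each sender splits its message into a common part (`a` for sender 1, `c` for sender 2) and a private
part (`b`, resp. `d`) and uses a random superposition code: given `q`, every common index `a`
carries an independent pair `(u, (x_b)_b)`, with `u` drawn from the marginal of `p₁` and the `x_b`
conditionally independent given `u` (`exists_superCode`). Receiver 1 decodes `(a, b)` and does not
care whether its guess of `c` is right. A wrong guess `(a', b', c')` falls into one of four classes
`S = (a' = a, c' = c)`, and each of the four quantities `I(X₁:Y₁|U₁U₂Q)`, `I(X₁U₂:Y₁|U₁Q)`,
`I(X₁:Y₁|U₂Q)`, `I(X₁U₂:Y₁|Q)` supplies a test `E_S` that accepts the true codeword and is rarely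
fooled by wrong guesses of class `S` (`HasTest`, the lemmas `hasTest_*`).

The difficulty is that one measurement has to imitate four non-commuting tests at once. For this
the output space is enlarged by labels `Option A × Option C` and the state of the codeword `(a, c)`
is imagined to be tilted by `|∅∅⟩ + δ(|a∅⟩ + |∅c⟩ + |ac⟩)`, which is close to `|∅∅⟩`. The part of the
tilt of a wrong codeword that is visible from the labels of `(a, c)` is exactly the subvector of
class `S`; as the four subvectors are linearly independent (with Gram matrix at least `δ²/16`), the
orthogonal complement of the tilted rejection spaces of the four `E_S` is a test that accepts the
true codeword up to a factor `256/δ²` in the errors, and that behaves on each wrong codeword like the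
matching `E_S` (`exists_tilted_test`). A soft union over `c` (`soft_union`) followed by a pretty good
measurement (`hayashi_nagaoka`) turns these tests into a POVM, which is then compressed back to the
labels `∅∅` (`receiver_decoder`).

Averaged over the codes, the error at receiver 1 is at most a constant times `δ² + 1/K + ε/δ²` plus
`K` times a sum of four products (number of wrong guesses of class `S`) · `2^(-v_S)`
(`receiver_total`), and with `θ = ε^(1/6)`, `δ² = θ³`, `K = 1/θ` this is `O(θ)` as soon as each
product is at most `2^(-s)`, where `3s = 1 + log₂(1/ε)` (`error_budget`). The sizes of the message
parts making this true are obtained by Fourier–Motzkin elimination (`exists_rateSplit`). Its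
degenerate cases, in which a threshold is negative, are handled by giving one message part the size
one, which makes the error classes involving that part empty. Each of the nine rate conditions
involves at most three information quantities; this is why a slack of `1/3` below the suprema
(`lowerReal`) and a loss of `s` in each class fit into the margin `2 + log₂(1/ε)`.

Finally the two receivers' failure probabilities are added (`product_success`) and a best `q` and a
best pair of codebooks are selected (`code_of_tests`).
-/

open Kronecker ComplexOrder

noncomputable section

/-- A probability distribution on a finite set: nonnegative and summing to one. -/
def IsProbDist {S : Type*} [Fintype S] (P : S → ℝ) : Prop :=
  (∀ s, 0 ≤ P s) ∧ ∑ s, P s = 1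

/-- A density matrix: positive semidefinite with trace one. -/
def IsDensity {ι : Type*} [Fintype ι] (ρ : Matrix ι ι ℂ) : Prop :=
  ρ.PosSemidef ∧ ρ.trace = 1

/-- A POVM element: `0 ≤ E ≤ I` in the Loewner order. -/
def IsPOVMElem {ι : Type*} [Fintype ι] [DecidableEq ι] (E : Matrix ι ι ℂ) : Prop :=
  E.PosSemidef ∧ ((1 : Matrix ι ι ℂ) - E).PosSemidef

/-- The hypothesis testing relative entropy `D_H^ε(α‖β)`, as an extended real:
the supremum of all `d : ℝ` such that some POVM element `E` accepts `α` with probability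
at least `1 − ε` while accepting `β` with probability at most `2^{−d}`. -/
def DH {ι : Type*} [Fintype ι] [DecidableEq ι] (ε : ℝ) (α β : Matrix ι ι ℂ) : EReal :=
  sSup ((fun d : ℝ => (d : EReal)) ''
    {d | ∃ E : Matrix ι ι ℂ, IsPOVMElem E ∧ 1 - ε ≤ ((E * α).trace).re ∧
      ((E * β).trace).re ≤ (2 : ℝ) ^ (-d)})

/-- The classical-quantum state `Σ_u |u⟩⟨u| ⊗ σ_u` (the weights are included in `σ`). -/
def cqState {U ι : Type*} [Fintype U] [DecidableEq U] [Fintype ι]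
    (σ : U → Matrix ι ι ℂ) : Matrix (U × ι) (U × ι) ℂ :=
  Matrix.of fun x y => if x.1 = y.1 then σ x.1 x.2 y.2 else 0

/-- Partial trace over the second (right) tensor factor. -/
def trR {α β : Type*} [Fintype α] [Fintype β]
    (M : Matrix (α × β) (α × β) ℂ) : Matrix α α ℂ :=
  Matrix.of fun a a' => ∑ b, M (a, b) (a', b)

/-- Partial trace over the first (left) tensor factor. -/
def trL {α β : Type*} [Fintype α] [Fintype β]
    (M : Matrix (α × β) (α × β) ℂ) : Matrix β β ℂ :=
  Matrix.of fun b b' => ∑ a, M (a, b) (a, b')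

section Interference

variable {Qt U1 X1 U2 X2 : Type*}
  [Fintype Qt] [Fintype U1] [Fintype X1] [Fintype U2] [Fintype X2]
  [DecidableEq Qt] [DecidableEq U1] [DecidableEq X1] [DecidableEq U2] [DecidableEq X2]
  {d1 d2 : ℕ}

/-- `p₂(u₂,·|q)`-weighted output state at receiver 1, given inputs `x₁` and (coarse) `u₂`:
`Σ_{x₂} p₂(u₂,x₂|q) · Tr_{Y₂} ρ_{x₁,x₂}`. -/
def w1 (p2 : Qt → U2 × X2 → ℝ)
    (ρ : X1 × X2 → Matrix (Fin d1 × Fin d2) (Fin d1 × Fin d2) ℂ)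
    (q : Qt) (x1 : X1) (u2 : U2) : Matrix (Fin d1) (Fin d1) ℂ :=
  ∑ x2, (p2 q (u2, x2) : ℂ) • trR (ρ (x1, x2))

/-- `p₁(u₁,·|q)`-weighted output state at receiver 2, given inputs `x₂` and (coarse) `u₁`. -/
def w2 (p1 : Qt → U1 × X1 → ℝ)
    (ρ : X1 × X2 → Matrix (Fin d1 × Fin d2) (Fin d1 × Fin d2) ℂ)
    (q : Qt) (x2 : X2) (u1 : U1) : Matrix (Fin d2) (Fin d2) ℂ :=
  ∑ x1, (p1 q (u1, x1) : ℂ) • trL (ρ (x1, x2))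

/-- `I_H^ε(X₁ : Y₁ | U₁U₂Q)`. -/
def IH_X1_Y1_U1U2Q (ε : ℝ) (pQ : Qt → ℝ) (p1 : Qt → U1 × X1 → ℝ) (p2 : Qt → U2 × X2 → ℝ)
    (ρ : X1 × X2 → Matrix (Fin d1 × Fin d2) (Fin d1 × Fin d2) ℂ) : EReal :=
  DH ε
    (cqState fun c : (Qt × U1 × U2) × X1 =>
      ((pQ c.1.1 * p1 c.1.1 (c.1.2.1, c.2) : ℝ) : ℂ) • w1 p2 ρ c.1.1 c.2 c.1.2.2)
    (cqState fun c : (Qt × U1 × U2) × X1 =>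
      ((pQ c.1.1 * p1 c.1.1 (c.1.2.1, c.2) / ∑ x, p1 c.1.1 (c.1.2.1, x) : ℝ) : ℂ) •
        ∑ x, (p1 c.1.1 (c.1.2.1, x) : ℂ) • w1 p2 ρ c.1.1 x c.1.2.2)

/-- `I_H^ε(X₁ : Y₁ | U₂Q)`. -/
def IH_X1_Y1_U2Q (ε : ℝ) (pQ : Qt → ℝ) (p1 : Qt → U1 × X1 → ℝ) (p2 : Qt → U2 × X2 → ℝ)
    (ρ : X1 × X2 → Matrix (Fin d1 × Fin d2) (Fin d1 × Fin d2) ℂ) : EReal :=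
  DH ε
    (cqState fun c : (Qt × U2) × X1 =>
      ((pQ c.1.1 * ∑ u1, p1 c.1.1 (u1, c.2) : ℝ) : ℂ) • w1 p2 ρ c.1.1 c.2 c.1.2)
    (cqState fun c : (Qt × U2) × X1 =>
      ((pQ c.1.1 * ∑ u1, p1 c.1.1 (u1, c.2) : ℝ) : ℂ) •
        ∑ x, ((∑ u1, p1 c.1.1 (u1, x) : ℝ) : ℂ) • w1 p2 ρ c.1.1 x c.1.2)

/-- `I_H^ε(X₁U₂ : Y₁ | U₁Q)`. -/
def IH_X1U2_Y1_U1Q (ε : ℝ) (pQ : Qt → ℝ) (p1 : Qt → U1 × X1 → ℝ) (p2 : Qt → U2 × X2 → ℝ)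
    (ρ : X1 × X2 → Matrix (Fin d1 × Fin d2) (Fin d1 × Fin d2) ℂ) : EReal :=
  DH ε
    (cqState fun c : (Qt × U1) × (X1 × U2) =>
      ((pQ c.1.1 * p1 c.1.1 (c.1.2, c.2.1) : ℝ) : ℂ) • w1 p2 ρ c.1.1 c.2.1 c.2.2)
    (cqState fun c : (Qt × U1) × (X1 × U2) =>
      ((pQ c.1.1 * p1 c.1.1 (c.1.2, c.2.1) * (∑ x2, p2 c.1.1 (c.2.2, x2)) /
          ∑ x, p1 c.1.1 (c.1.2, x) : ℝ) : ℂ) •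
        ∑ x, ∑ v2, (p1 c.1.1 (c.1.2, x) : ℂ) • w1 p2 ρ c.1.1 x v2)

/-- `I_H^ε(X₁U₂ : Y₁ | Q)`. -/
def IH_X1U2_Y1_Q (ε : ℝ) (pQ : Qt → ℝ) (p1 : Qt → U1 × X1 → ℝ) (p2 : Qt → U2 × X2 → ℝ)
    (ρ : X1 × X2 → Matrix (Fin d1 × Fin d2) (Fin d1 × Fin d2) ℂ) : EReal :=
  DH ε
    (cqState fun c : Qt × (X1 × U2) =>
      ((pQ c.1 * ∑ u1, p1 c.1 (u1, c.2.1) : ℝ) : ℂ) • w1 p2 ρ c.1 c.2.1 c.2.2)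
    (cqState fun c : Qt × (X1 × U2) =>
      ((pQ c.1 * (∑ u1, p1 c.1 (u1, c.2.1)) * (∑ x2, p2 c.1 (c.2.2, x2)) : ℝ) : ℂ) •
        ∑ x, ∑ v2, ((∑ u1, p1 c.1 (u1, x) : ℝ) : ℂ) • w1 p2 ρ c.1 x v2)

/-- `I_H^ε(X₂ : Y₂ | U₁U₂Q)`. -/
def IH_X2_Y2_U1U2Q (ε : ℝ) (pQ : Qt → ℝ) (p1 : Qt → U1 × X1 → ℝ) (p2 : Qt → U2 × X2 → ℝ)
    (ρ : X1 × X2 → Matrix (Fin d1 × Fin d2) (Fin d1 × Fin d2) ℂ) : EReal :=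
  DH ε
    (cqState fun c : (Qt × U1 × U2) × X2 =>
      ((pQ c.1.1 * p2 c.1.1 (c.1.2.2, c.2) : ℝ) : ℂ) • w2 p1 ρ c.1.1 c.2 c.1.2.1)
    (cqState fun c : (Qt × U1 × U2) × X2 =>
      ((pQ c.1.1 * p2 c.1.1 (c.1.2.2, c.2) / ∑ x, p2 c.1.1 (c.1.2.2, x) : ℝ) : ℂ) •
        ∑ x, (p2 c.1.1 (c.1.2.2, x) : ℂ) • w2 p1 ρ c.1.1 x c.1.2.1)

/-- `I_H^ε(X₂ : Y₂ | U₁Q)`. -/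
def IH_X2_Y2_U1Q (ε : ℝ) (pQ : Qt → ℝ) (p1 : Qt → U1 × X1 → ℝ) (p2 : Qt → U2 × X2 → ℝ)
    (ρ : X1 × X2 → Matrix (Fin d1 × Fin d2) (Fin d1 × Fin d2) ℂ) : EReal :=
  DH ε
    (cqState fun c : (Qt × U1) × X2 =>
      ((pQ c.1.1 * ∑ u2, p2 c.1.1 (u2, c.2) : ℝ) : ℂ) • w2 p1 ρ c.1.1 c.2 c.1.2)
    (cqState fun c : (Qt × U1) × X2 =>
      ((pQ c.1.1 * ∑ u2, p2 c.1.1 (u2, c.2) : ℝ) : ℂ) •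
        ∑ x, ((∑ u2, p2 c.1.1 (u2, x) : ℝ) : ℂ) • w2 p1 ρ c.1.1 x c.1.2)

/-- `I_H^ε(X₂U₁ : Y₂ | U₂Q)`. -/
def IH_X2U1_Y2_U2Q (ε : ℝ) (pQ : Qt → ℝ) (p1 : Qt → U1 × X1 → ℝ) (p2 : Qt → U2 × X2 → ℝ)
    (ρ : X1 × X2 → Matrix (Fin d1 × Fin d2) (Fin d1 × Fin d2) ℂ) : EReal :=
  DH ε
    (cqState fun c : (Qt × U2) × (X2 × U1) =>
      ((pQ c.1.1 * p2 c.1.1 (c.1.2, c.2.1) : ℝ) : ℂ) • w2 p1 ρ c.1.1 c.2.1 c.2.2)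
    (cqState fun c : (Qt × U2) × (X2 × U1) =>
      ((pQ c.1.1 * p2 c.1.1 (c.1.2, c.2.1) * (∑ x1, p1 c.1.1 (c.2.2, x1)) /
          ∑ x, p2 c.1.1 (c.1.2, x) : ℝ) : ℂ) •
        ∑ x, ∑ v1, (p2 c.1.1 (c.1.2, x) : ℂ) • w2 p1 ρ c.1.1 x v1)

/-- `I_H^ε(X₂U₁ : Y₂ | Q)`. -/
def IH_X2U1_Y2_Q (ε : ℝ) (pQ : Qt → ℝ) (p1 : Qt → U1 × X1 → ℝ) (p2 : Qt → U2 × X2 → ℝ)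
    (ρ : X1 × X2 → Matrix (Fin d1 × Fin d2) (Fin d1 × Fin d2) ℂ) : EReal :=
  DH ε
    (cqState fun c : Qt × (X2 × U1) =>
      ((pQ c.1 * ∑ u2, p2 c.1 (u2, c.2.1) : ℝ) : ℂ) • w2 p1 ρ c.1 c.2.1 c.2.2)
    (cqState fun c : Qt × (X2 × U1) =>
      ((pQ c.1 * (∑ u2, p2 c.1 (u2, c.2.1)) * (∑ x1, p1 c.1 (c.2.2, x1)) : ℝ) : ℂ) •
        ∑ x, ∑ v1, ((∑ u2, p2 c.1 (u2, x) : ℝ) : ℂ) • w2 p1 ρ c.1 x v1)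

/-- Existence of an `(N₁, N₂, δ)` interference-channel code for the channel outputs
`ρ_{x₁,x₂}`: encoders and POVMs for the two receivers whose average success probability
is at least `1 − δ`. -/
def ExistsICCode (ρ : X1 × X2 → Matrix (Fin d1 × Fin d2) (Fin d1 × Fin d2) ℂ)
    (N1 N2 : ℕ) (δ : ℝ) : Prop :=
  ∃ (E1 : Fin N1 → X1) (E2 : Fin N2 → X2)
    (Λ : Fin N1 → Matrix (Fin d1) (Fin d1) ℂ)
    (Λ' : Fin N2 → Matrix (Fin d2) (Fin d2) ℂ),
    (∀ m, (Λ m).PosSemidef) ∧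
    ((1 : Matrix (Fin d1) (Fin d1) ℂ) - ∑ m, Λ m).PosSemidef ∧
    (∀ m, (Λ' m).PosSemidef) ∧
    ((1 : Matrix (Fin d2) (Fin d2) ℂ) - ∑ m, Λ' m).PosSemidef ∧
    1 - δ ≤ ((N1 * N2 : ℝ))⁻¹ * ∑ m : Fin N1 × Fin N2,
      (((Λ m.1 ⊗ₖ Λ' m.2) * ρ (E1 m.1, E2 m.2)).trace).re

section Coding
open scoped MatrixOrder Matrix.Norms.L2Operator

/-! ### Soft unions, pretty good measurements and spectral projections in C⋆-algebras -/

/-- The functional calculus of `x ↦ c - f x`, for a constant `c`. -/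
theorem cfc_const_sub {A : Type*} [CStarAlgebra A]
    (c : ℝ) (f : ℝ → ℝ) (y : A) (hf : ContinuousOn f (spectrum ℝ y) := by fun_prop)
    (hy : IsSelfAdjoint y := by cfc_tac) :
    cfc (fun x => c - f x) y = algebraMap ℝ A c - cfc f y := by
  rw [cfc_sub (fun _ => c) f y continuousOn_const hf, cfc_const c y]

/-- The resolvent `(1 + y)⁻¹` of a nonnegative element, as a functional calculus. -/
theorem cfc_res {A : Type*} [CStarAlgebra A] [PartialOrder A] [StarOrderedRing A]
    (y : A) (hy : 0 ≤ y) : Ring.inverse (1 + y) = cfc (fun x : ℝ => (1 + x)⁻¹) y := by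
  have hsp : ∀ x ∈ spectrum ℝ y, 0 ≤ x := fun x hx => spectrum_nonneg_of_nonneg hy hx
  have hc : ContinuousOn (fun x : ℝ => (1 + x)⁻¹) (spectrum ℝ y) := by
    refine ContinuousOn.inv₀ (by fun_prop) fun x hx => ?_
    have := hsp x hx; positivity
  have hsa : IsSelfAdjoint y := IsSelfAdjoint.of_nonneg hy
  have e1 : (1 : A) + y = cfc (fun x : ℝ => 1 + x) y := by
    rw [cfc_const_add (1:ℝ) (fun x => x) y, cfc_id' ℝ y, map_one]
  have hone : cfc (fun x : ℝ => (1 + x) * (1 + x)⁻¹) y = 1 := by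
    rw [← cfc_one ℝ y]
    refine cfc_congr fun x hx => ?_
    have := hsp x hx
    have : 1 + x ≠ 0 := by positivity
    simp [this]
  have m1 : (1 + y) * cfc (fun x : ℝ => (1 + x)⁻¹) y = 1 := by
    rw [e1, ← cfc_mul _ _ y (by fun_prop) hc, hone]
  have m2 : cfc (fun x : ℝ => (1 + x)⁻¹) y * (1 + y) = 1 := by
    have := (cfc_commute_cfc (R := ℝ) (fun x : ℝ => (1 + x)⁻¹) (fun x : ℝ => 1 + x) y).eq
    rw [← e1] at this
    rw [this, m1]
  have hu : IsUnit (1 + y) := ⟨⟨_, _, m1, m2⟩, rfl⟩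
  calc Ring.inverse (1 + y) = Ring.inverse (1 + y) * ((1 + y) * cfc (fun x : ℝ => (1 + x)⁻¹) y) := by
        rw [m1, mul_one]
    _ = _ := Ring.inverse_mul_cancel_left _ _ hu

/-- A soft union of tests: `a = 1 - (1 + K ∑ P i)⁻¹` satisfies a union bound with constant `K` and
rejects no more than any single `P i` does, up to an error `1 / K`. Both bounds come from the operator
antitonicity of the inverse. -/
theorem soft_union {A ι : Type*} [CStarAlgebra A] [PartialOrder A] [StarOrderedRing A] [Fintype ι]
    (P : ι → A) (h0 : ∀ i, 0 ≤ P i) (h1 : ∀ i, P i ≤ 1) {K : ℝ} (hK : 0 < K) :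
    ∃ a : A, 0 ≤ a ∧ a ≤ 1 ∧ a ≤ K • ∑ i, P i ∧ ∀ i, 1 - a ≤ (1 / K) • (1 : A) + (1 - P i) := by
  have hs : 0 ≤ K • ∑ i, P i := smul_nonneg hK.le (Finset.sum_nonneg fun i _ => h0 i)
  have hP : ∀ i, K • P i ≤ K • ∑ i, P i := fun i =>
    smul_le_smul_of_nonneg_left (Finset.single_le_sum (fun i _ => h0 i) (Finset.mem_univ i)) hK.le
  set s := K • ∑ i, P i with hsdef
  have hcont : ∀ y : A, 0 ≤ y → ContinuousOn (fun x : ℝ => (1 + x)⁻¹) (spectrum ℝ y) := by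
    intro y hy
    refine ContinuousOn.inv₀ (by fun_prop) fun x hx => ?_
    have : 0 ≤ x := spectrum_nonneg_of_nonneg hy hx
    positivity
  have hle : Ring.inverse (1 + s) ≤ 1 := by
    rw [cfc_res s hs, cfc_le_one_iff _ s (hcont s hs)]
    intro x hx
    have : 0 ≤ x := spectrum_nonneg_of_nonneg hs hx
    exact inv_le_one_of_one_le₀ (by linarith)
  have hge : 0 ≤ Ring.inverse (1 + s) := by
    rw [cfc_res s hs]
    refine cfc_nonneg fun x hx => ?_
    have : 0 ≤ x := spectrum_nonneg_of_nonneg hs hx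
    positivity
  refine ⟨1 - Ring.inverse (1 + s), by simpa using hle, by simpa using hge, ?_, ?_⟩
  · rw [sub_le_iff_le_add, cfc_res s hs, ← sub_le_iff_le_add']
    have e : 1 - s = cfc (fun x : ℝ => 1 - x) s := by
      rw [cfc_const_sub (1:ℝ) (fun x => x) s, cfc_id' ℝ s, map_one]
    rw [e, cfc_le_iff _ _ s (by fun_prop) (hcont s hs)]
    intro x hx
    have hx : 0 ≤ x := spectrum_nonneg_of_nonneg hs hx
    rw [← one_div, le_div_iff₀ (by positivity)]
    nlinarith
  · intro i
    have hy : 0 ≤ K • P i := smul_nonneg hK.le (h0 i)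
    rw [sub_sub_cancel]
    have hsp : IsStrictlyPositive (1 + K • P i) :=
      IsStrictlyPositive.add_nonneg isStrictlyPositive_one hy
    refine (CStarAlgebra.ringInverse_le_ringInverse
      (add_le_add_right (hP i) 1) hsp).trans ?_
    set y := K • P i with hydef
    have hyK : y ≤ algebraMap ℝ A K := by
      rw [Algebra.algebraMap_eq_smul_one]
      exact smul_le_smul_of_nonneg_left (h1 i) hK.le
    have hsa : IsSelfAdjoint y := IsSelfAdjoint.of_nonneg hy
    have e : (1 / K) • (1 : A) + (1 - P i) = cfc (fun x : ℝ => (1 / K + 1) - 1 / K * x) y := by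
      rw [cfc_const_sub (1 / K + 1 :ℝ) (fun x => 1 / K * x) y, cfc_const_mul (1 / K) (fun x => x) y,
        cfc_id' ℝ y, map_add, map_one, Algebra.algebraMap_eq_smul_one, hydef, smul_smul,
        one_div_mul_cancel hK.ne', one_smul]
      abel
    rw [e, cfc_res y hy, cfc_le_iff _ _ y (hcont y hy) (by fun_prop)]
    intro x hx
    have hx0 : 0 ≤ x := spectrum_nonneg_of_nonneg hy hx
    have hx1 : x ≤ K := (le_algebraMap_iff_spectrum_le hsa).1 hyK x hx
    rw [inv_le_iff_one_le_mul₀ (by positivity)]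
    have : (1 / K + 1 - 1 / K * x) = (1 + (K - x)) / K := by field_simp; ring
    rw [this, div_mul_eq_mul_div, le_div_iff₀ hK]
    nlinarith [mul_nonneg hx0 (sub_nonneg.2 hx1)]

/-- The Hayashi–Nagaoka inequality for the pretty good measurement
`L i = S^(-1/2) a_i S^(-1/2)`. The sum `S` is regularised by `η`, which makes it invertible at the cost of
the last term. -/
theorem hayashi_nagaoka {A ι : Type*} [CStarAlgebra A] [PartialOrder A] [StarOrderedRing A]
    [Fintype ι] [DecidableEq ι]
    (a : ι → A) (h0 : ∀ i, 0 ≤ a i) (h1 : ∀ i, a i ≤ 1) {η : ℝ} (hη : 0 < η) :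
    ∃ L : ι → A, (∀ i, 0 ≤ L i) ∧ ∑ i, L i ≤ 1 ∧
      ∀ i, 1 - L i ≤ (2 : ℝ) • (1 - a i) + (4 : ℝ) • ∑ j ∈ Finset.univ.erase i, a j
        + (4 * η) • (1 : A) := by
  set S : A := ∑ i, a i + η • (1 : A) with hS
  have hsum : 0 ≤ ∑ i, a i := Finset.sum_nonneg fun i _ => h0 i
  have hSp : IsStrictlyPositive S :=
    IsStrictlyPositive.nonneg_add hsum (isStrictlyPositive_one.smul hη)
  set R : A := CFC.sqrt S with hR
  have hRR : R * R = S := CFC.sqrt_mul_sqrt_self S hSp.nonneg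
  have hR0 : 0 ≤ R := CFC.sqrt_nonneg S
  have hRu : IsUnit R := by
    have : IsUnit (R * R) := hRR ▸ hSp.isUnit
    exact ((Commute.refl R).isUnit_mul_iff.1 this).1
  set B : A := Ring.inverse R with hB
  have hBR : B * R = 1 := Ring.inverse_mul_cancel R hRu
  have hRB : R * B = 1 := Ring.mul_inverse_cancel R hRu
  have hBs : star B = B := by
    have hRs : star R = R := (IsSelfAdjoint.of_nonneg hR0).star_eq
    have : star B * R = 1 := by
      have := congrArg star hRB
      simpa [hRs] using this
    calc star B = star B * (R * B) := by rw [hRB, mul_one]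
      _ = B := by rw [← mul_assoc, this, one_mul]
  have conj : ∀ x y z : A, star z = z → x ≤ y → z * x * z ≤ z * y * z := by
    intro x y z hz hxy
    have := star_left_conjugate_le_conjugate hxy z
    rwa [hz] at this
  have hBSB : B * S * B = 1 := by
    rw [← hRR, ← mul_assoc, hBR, one_mul, hRB]
  refine ⟨fun i => B * a i * B, fun i => ?_, ?_, fun i => ?_⟩
  · simpa using conj _ _ B hBs (h0 i)
  · rw [← Finset.sum_mul, ← Finset.mul_sum, ← hBSB]
    apply conj _ _ B hBs
    rw [hS]
    exact le_add_of_nonneg_right (smul_nonneg hη.le zero_le_one)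
  · set T : A := ∑ j ∈ Finset.univ.erase i, a j + η • (1 : A) with hT
    have hT0 : 0 ≤ T := add_nonneg (Finset.sum_nonneg fun i _ => h0 i) (smul_nonneg hη.le zero_le_one)
    have hST : S = a i + T := by
      rw [hS, hT, ← Finset.add_sum_erase _ _ (Finset.mem_univ i), add_assoc]
    -- `a² ≤ a ≤ S`, and the square root is operator monotone
    have hRa : a i ≤ R := by
      have e : CFC.sqrt (a i * a i) = a i := CFC.sqrt_mul_self (a i) (h0 i)
      have : a i * a i ≤ S := by
        have h2 : a i * a i ≤ a i := by
          have q := conj _ _ (CFC.sqrt (a i)) (IsSelfAdjoint.of_nonneg (CFC.sqrt_nonneg _)).star_eq (h1 i)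
          have q2 : CFC.sqrt (a i) * CFC.sqrt (a i) = a i := CFC.sqrt_mul_sqrt_self _ (h0 i)
          have q3 : CFC.sqrt (a i) * a i * CFC.sqrt (a i) = a i * a i := by
            have q4 : ∀ r : A, r * (r * r) * r = (r * r) * (r * r) := fun r => by noncomm_ring
            have := q4 (CFC.sqrt (a i))
            rwa [q2] at this
          rw [q3, mul_one, q2] at q
          exact q
        refine h2.trans ?_
        rw [hST]; exact le_add_of_nonneg_right hT0
      have := CFC.sqrt_le_sqrt _ _ this
      rwa [e] at this
    have h1L : 1 - B * a i * B = B * T * B := by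
      conv_lhs => rw [← hBSB, hST]
      noncomm_ring
    have hC : star (1 - B) = 1 - B := by simp [hBs]
    have hC2 : star (1 + (1 - B)) = 1 + (1 - B) := by simp [hBs]
    -- the parallelogram law, dropping the positive term with `2 - B`
    have par : B * T * B ≤ (2 : ℝ) • T + (2 : ℝ) • ((1 - B) * T * (1 - B)) := by
      have := conj _ _ (1 + (1 - B)) hC2 hT0
      rw [mul_zero, zero_mul] at this
      rw [← sub_nonneg]
      convert this using 1
      simp only [two_smul]
      noncomm_ring
    have k1 : (1 - B) * T * (1 - B) ≤ (1 - B) * S * (1 - B) :=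
      conj _ _ _ hC (by rw [hST]; exact le_add_of_nonneg_left (h0 i))
    have k2 : (1 - B) * S * (1 - B) = S - R - R + 1 := by
      rw [← hRR]
      have : (1 - B) * (R * R) * (1 - B) = R * R - (B * R) * R - R * (R * B) + (B * R) * (R * B) := by
        noncomm_ring
      rw [this, hBR, hRB]; simp
    have k3 : S - R - R + 1 ≤ (1 - a i) + T := by
      rw [hST]
      have : (1 - a i) + T - (a i + T - R - R + 1) = (R - a i) + (R - a i) := by abel
      rw [← sub_nonneg, this]
      exact add_nonneg (sub_nonneg.2 hRa) (sub_nonneg.2 hRa)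
    calc 1 - B * a i * B = B * T * B := h1L
      _ ≤ (2 : ℝ) • T + (2 : ℝ) • ((1 - B) * T * (1 - B)) := par
      _ ≤ (2 : ℝ) • T + (2 : ℝ) • ((1 - a i) + T) :=
        add_le_add_right (smul_le_smul_of_nonneg_left (k1.trans (k2.le.trans k3)) (by norm_num)) _
      _ = _ := by rw [hT]; module

/-- The spectral projection `P` onto the kernel of a nonnegative `G` with a spectral gap `c` above
zero, the gap being expressed by `c • G ≤ G * G`. -/
theorem kernel_proj {A : Type*} [CStarAlgebra A] [PartialOrder A] [StarOrderedRing A]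
    (G : A) (hfin : (spectrum ℝ G).Finite) (hG : 0 ≤ G) {c : ℝ} (hc : 0 < c) (h : c • G ≤ G * G) :
    ∃ P : A, 0 ≤ P ∧ P ≤ 1 ∧ P * G = 0 ∧ 1 - P ≤ c⁻¹ • G := by
  have hco : ∀ f : ℝ → ℝ, ContinuousOn f (spectrum ℝ G) := fun f => by
    exact hfin.continuousOn f
  have hsa : IsSelfAdjoint G := IsSelfAdjoint.of_nonneg hG
  have hgap : ∀ x ∈ spectrum ℝ G, c * x ≤ x * x := by
    have e1 : c • G = cfc (fun x : ℝ => c * x) G := by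
      rw [cfc_const_mul c (fun x => x) G, cfc_id' ℝ G]
    have e2 : G * G = cfc (fun x : ℝ => x * x) G := by
      rw [cfc_mul (fun x => x) (fun x => x) G, cfc_id' ℝ G]
    rw [e1, e2, cfc_le_iff _ _ G] at h
    exact h
  refine ⟨cfc (fun x : ℝ => if x = 0 then 1 else 0) G, ?_, ?_, ?_, ?_⟩
  · exact cfc_nonneg fun x _ => by split_ifs <;> norm_num
  · exact cfc_le_one _ _ fun x _ => by split_ifs <;> norm_num
  · have : cfc (fun x : ℝ => (if x = 0 then 1 else 0) * x) G = 0 := by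
      rw [← cfc_zero (R := ℝ) G]
      exact cfc_congr fun x _ => by simp
    rw [cfc_mul _ _ G (hco _) (hco _), cfc_id' ℝ G] at this
    exact this
  · have e1 : c⁻¹ • G = cfc (fun x : ℝ => c⁻¹ * x) G := by
      rw [cfc_const_mul c⁻¹ (fun x => x) G, cfc_id' ℝ G]
    have e2 : 1 - cfc (fun x : ℝ => if x = 0 then (1:ℝ) else 0) G =
        cfc (fun x : ℝ => 1 - if x = 0 then (1:ℝ) else 0) G := by
      rw [cfc_const_sub 1 _ G (hco _), map_one]
    rw [e1, e2, cfc_le_iff _ _ G (hco _) (hco _)]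
    intro x hx
    have h0 : 0 ≤ x := spectrum_nonneg_of_nonneg hG hx
    have := hgap x hx
    by_cases hx0 : x = 0
    · simp [hx0]
    · simp only [hx0, if_false, sub_zero]
      have hxp : 0 < x := lt_of_le_of_ne h0 (Ne.symm hx0)
      have : c ≤ x := le_of_mul_le_mul_right this hxp
      rw [inv_mul_eq_div, le_div_iff₀ hc]; linarith

/-- The rejection projection of a test `E`, onto the eigenvalues below `1/2`. -/
theorem half_proj {A : Type*} [CStarAlgebra A] [PartialOrder A] [StarOrderedRing A]
    (E : A) (hfin : (spectrum ℝ E).Finite) (h0 : 0 ≤ E) (h1 : E ≤ 1) :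
    ∃ W : A, 0 ≤ W ∧ W ≤ 1 ∧ W * W = W ∧ W ≤ (2 : ℝ) • (1 - E) ∧ 1 - W ≤ (2 : ℝ) • E := by
  have hco : ∀ f : ℝ → ℝ, ContinuousOn f (spectrum ℝ E) := fun f => by
    exact hfin.continuousOn f
  have hsa : IsSelfAdjoint E := IsSelfAdjoint.of_nonneg h0
  have hs0 : ∀ x ∈ spectrum ℝ E, 0 ≤ x := fun x hx => spectrum_nonneg_of_nonneg h0 hx
  have hs1 : ∀ x ∈ spectrum ℝ E, x ≤ 1 := by
    refine (le_algebraMap_iff_spectrum_le hsa).1 ?_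
    simpa using h1
  refine ⟨cfc (fun x : ℝ => if x < 1 / 2 then 1 else 0) E, ?_, ?_, ?_, ?_, ?_⟩
  · exact cfc_nonneg fun x _ => by split_ifs <;> norm_num
  · exact cfc_le_one _ _ fun x _ => by split_ifs <;> norm_num
  · rw [← cfc_mul _ _ E (hco _) (hco _)]
    exact cfc_congr fun x _ => by simp
  · have e1 : (2 : ℝ) • (1 - E) = cfc (fun x : ℝ => 2 * (1 - x)) E := by
      rw [cfc_const_mul 2 (fun x => 1 - x) E, cfc_const_sub 1 (fun x => x) E, cfc_id' ℝ E, map_one]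
    rw [e1, cfc_le_iff _ _ E (hco _) (hco _)]
    intro x hx
    have := hs1 x hx
    split_ifs <;> linarith
  · have e1 : (2 : ℝ) • E = cfc (fun x : ℝ => 2 * x) E := by
      rw [cfc_const_mul 2 (fun x => x) E, cfc_id' ℝ E]
    have e2 : 1 - cfc (fun x : ℝ => if x < 1 / 2 then (1:ℝ) else 0) E =
        cfc (fun x : ℝ => 1 - if x < 1 / 2 then (1:ℝ) else 0) E := by
      rw [cfc_const_sub 1 _ E (hco _), map_one]
    rw [e1, e2, cfc_le_iff _ _ E (hco _) (hco _)]
    intro x hx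
    have := hs0 x hx
    split_ifs <;> linarith

/-! ### Non-unique decoding and tilt vectors -/

/-- Non-unique decoding: a measurement that identifies `m` from tests `P m c`, without having to get
`c` right. The error for the true pair `(m, c)` involves only wrong values of `m`. -/
theorem nonunique_decoder {A M C : Type*} [CStarAlgebra A] [PartialOrder A] [StarOrderedRing A]
    [Fintype M] [DecidableEq M] [Fintype C]
    (P : M → C → A) (h0 : ∀ m c, 0 ≤ P m c) (h1 : ∀ m c, P m c ≤ 1) {K : ℝ} (hK : 0 < K) :
    ∃ L : M → A, (∀ m, 0 ≤ L m) ∧ ∑ m, L m ≤ 1 ∧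
      ∀ m c, 1 - L m ≤ (6 / K) • (1 : A) + (2 : ℝ) • (1 - P m c)
        + (4 * K) • ∑ m' ∈ Finset.univ.erase m, ∑ c', P m' c' := by
  choose a ha0 ha1 haK hac using fun m => soft_union (P m) (h0 m) (h1 m) hK
  obtain ⟨L, hL0, hL1, hL⟩ := hayashi_nagaoka a ha0 ha1 (one_div_pos.2 hK)
  refine ⟨L, hL0, hL1, fun m c => (hL m).trans ?_⟩
  have e1 := smul_le_smul_of_nonneg_left (hac m c) (zero_le_two (α := ℝ))
  have e2 : (4 : ℝ) • ∑ j ∈ Finset.univ.erase m, a j ≤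
      (4 * K) • ∑ m' ∈ Finset.univ.erase m, ∑ c', P m' c' := by
    rw [mul_smul, Finset.smul_sum (r := K)]
    exact smul_le_smul_of_nonneg_left (Finset.sum_le_sum fun i _ => haK i) (by norm_num : (0:ℝ) ≤ 4)
  refine (add_le_add (add_le_add e1 e2) le_rfl).trans (le_of_eq ?_)
  module

section Tilt

variable {D A C : Type*} [Fintype D] [DecidableEq D] [Fintype A] [DecidableEq A]
  [Fintype C] [DecidableEq C]

/-- The map `h ↦ h ⊗ t` from `D` to `D × Lab`. -/
def tensorVec {D Lab : Type*} [DecidableEq D] (t : Lab → ℝ) : Matrix (D × Lab) D ℂ :=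
  Matrix.of fun x d => if x.1 = d then (t x.2 : ℂ) else 0

open Matrix

theorem tensorVec_sub {Lab : Type*} (s t : Lab → ℝ) :
    (tensorVec (fun l => s l - t l) : Matrix (D × Lab) D ℂ) = tensorVec s - tensorVec t := by
  ext x d
  simp only [tensorVec, of_apply, Matrix.sub_apply]
  split_ifs <;> simp

theorem tensorVec_star_mul {Lab : Type*} [Fintype Lab] (s t : Lab → ℝ) :
    (tensorVec s : Matrix (D × Lab) D ℂ)ᴴ * (tensorVec t : Matrix (D × Lab) D ℂ) = (∑ l, s l * t l) • (1 : Matrix D D ℂ) := by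
  ext d e
  simp only [tensorVec, mul_apply, conjTranspose_apply, of_apply, Fintype.sum_prod_type,
    Matrix.smul_apply, one_apply]
  rw [Finset.sum_eq_single d]
  · by_cases h : d = e
    · simp [h]
    · simp [h]
  · intro b _ hb
    simp [hb]
  · simp

/-- The tilt vector `|∅∅⟩ + δ(|a∅⟩ + |∅c⟩ + |ac⟩)`, with `none` in the role of `∅`, restricted to the
labels that use `a` only if `S.1` and use `c` only if `S.2`. -/
def tiltVec (δ : ℝ) (a : A) (c : C) (S : Bool × Bool) (l : Option A × Option C) : ℝ :=
  if (l.1 = none ∨ (S.1 = true ∧ l.1 = some a)) ∧ (l.2 = none ∨ (S.2 = true ∧ l.2 = some c)) then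
    (if l = (none, none) then 1 else δ) else 0

/-- The untilted label `|∅∅⟩`. -/
def baseVec (l : Option A × Option C) : ℝ := if l = (none, none) then 1 else 0

theorem sum_tilt_mul_full (δ : ℝ) (a : A) (c : C) (S : Bool × Bool) :
    ∑ l, tiltVec δ a c S l * tiltVec δ a c (true, true) l =
      1 + (if S.1 then δ ^ 2 else 0) + (if S.2 then δ ^ 2 else 0) +
        (if S.1 && S.2 then δ ^ 2 else 0) := by
  rcases S with ⟨s1, s2⟩
  cases s1 <;> cases s2 <;>
    simp [Fintype.sum_prod_type, Fintype.sum_option, tiltVec, Finset.sum_add_distrib, ite_and] <;> ring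

theorem sum_tilt_mul_self (δ : ℝ) (a : A) (c : C) (S : Bool × Bool) :
    ∑ l, tiltVec δ a c S l * tiltVec δ a c S l =
      ∑ l, tiltVec δ a c S l * tiltVec δ a c (true, true) l := by
  refine Finset.sum_congr rfl fun l _ => ?_
  unfold tiltVec
  by_cases h : (l.1 = none ∨ (S.1 = true ∧ l.1 = some a)) ∧ (l.2 = none ∨ (S.2 = true ∧ l.2 = some c))
  · have : (l.1 = none ∨ (true = true ∧ l.1 = some a)) ∧ (l.2 = none ∨ (true = true ∧ l.2 = some c)) := by
      tauto
    rw [if_pos h, if_pos this]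
  · rw [if_neg h, zero_mul, zero_mul]

theorem sum_tilt_sub_base (δ : ℝ) (a : A) (c : C) :
    ∑ l, (tiltVec δ a c (true, true) l - baseVec l) * (tiltVec δ a c (true, true) l - baseVec l) =
      3 * δ ^ 2 := by
  simp [Fintype.sum_prod_type, Fintype.sum_option, tiltVec, baseVec, Finset.sum_add_distrib, ite_and]
  ring

theorem sum_base_mul_self : ∑ l : Option A × Option C, baseVec l * baseVec l = 1 := by
  simp [baseVec]

/-- The indicator function of the labels that do not belong to the codeword `(a, c)`, that is, outside
`{∅, a} × {∅, c}`. -/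
def outside (a : A) (c : C) (l : Option A × Option C) : ℝ :=
  if (l.1 = none ∨ l.1 = some a) ∧ (l.2 = none ∨ l.2 = some c) then 0 else 1

/-- On the labels of `(a, c)`, the tilt of another codeword `(a', c')` is the subvector of the tilt of
`(a, c)` determined by which of the two indices agree. -/
theorem tilt_split (δ : ℝ) (a a' : A) (c c' : C) (l : Option A × Option C) :
    tiltVec δ a' c' (true, true) l =
      tiltVec δ a c (decide (a' = a), decide (c' = c)) l
        + outside a c l * tiltVec δ a' c' (true, true) l := by
  rcases l with ⟨_ | x, _ | y⟩ <;> simp only [tiltVec, outside] <;>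
    by_cases h1 : a' = a <;> by_cases h2 : c' = c <;> simp [h1, h2] <;> grind

theorem tilt_outside (δ : ℝ) (a : A) (c : C) (S : Bool × Bool) (l : Option A × Option C) :
    outside a c l = 0 ∨ (outside a c l = 1 ∧ tiltVec δ a c S l = 0) := by
  unfold outside tiltVec
  split_ifs <;> tauto

end Tilt

/-! ### Linear independence of the tilts, quantitatively -/

section Tilt2
open Matrix
variable {D A C : Type*} [Fintype D] [DecidableEq D] [Fintype A] [DecidableEq A]
  [Fintype C] [DecidableEq C]

/-- The matrix whose columns are the four restrictions of the tilt vector of `(a, c)`. -/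
def tiltMat (δ : ℝ) (a : A) (c : C) : Matrix (Option A × Option C) (Bool × Bool) ℂ :=
  Matrix.of fun l S => (tiltVec δ a c S l : ℂ)

/-- The four restrictions of the tilt vector are linearly independent, with smallest squared
singular value at least `δ² / 16`. -/
theorem tilt_quad_real (δ : ℝ) (h0 : 0 < δ) (h1 : δ ≤ 1) (a : A) (c : C) (z : Bool × Bool → ℝ) :
    δ ^ 2 / 16 * ∑ S, z S ^ 2 ≤ ∑ l, (∑ S, tiltVec δ a c S l * z S) ^ 2 := by
  have e : ∑ l, (∑ S, tiltVec δ a c S l * z S) ^ 2 =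
      (z (true, true) + z (true, false) + z (false, true) + z (false, false)) ^ 2
      + (δ * (z (true, true) + z (true, false))) ^ 2 + (δ * (z (true, true) + z (false, true))) ^ 2
      + (δ * z (true, true)) ^ 2 := by
    simp [Fintype.sum_prod_type, Fintype.sum_option, tiltVec, ite_and]
    have e1 : ∀ x : A, ((if x = a then δ * z (true, true) else 0) + if x = a then δ * z (true, false) else 0) ^ 2
        = if x = a then (δ * (z (true, true) + z (true, false))) ^ 2 else 0 := by
      intro x; split_ifs <;> ring
    have e2 : ∀ x : C, ((if x = c then δ * z (true, true) else 0) + if x = c then δ * z (false, true) else 0) ^ 2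
        = if x = c then (δ * (z (true, true) + z (false, true))) ^ 2 else 0 := by
      intro x; split_ifs <;> ring
    have e3 : ∀ (y : A) (x : C), ((if y = a then if x = c then δ * z (true, true) else 0 else 0)) ^ 2
        = if y = a then if x = c then (δ * z (true, true)) ^ 2 else 0 else 0 := by
      intro y x; split_ifs <;> ring
    simp only [e1, e2, e3, Finset.sum_add_distrib]
    simp
    ring
  rw [e]
  simp only [Fintype.sum_prod_type, Fintype.sum_bool]
  generalize z (true, true) = t
  generalize z (true, false) = x
  generalize z (false, true) = y
  generalize z (false, false) = w
  have hd : δ ^ 2 ≤ 1 := by nlinarith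
  have h3 : δ ^ 2 * (t + x + y + w) ^ 2 ≤ 1 * (t + x + y + w) ^ 2 :=
    mul_le_mul_of_nonneg_right hd (sq_nonneg _)
  have h4 : 1 / 16 * (t ^ 2 + x ^ 2 + (y ^ 2 + w ^ 2)) ≤
      (t + x + y + w) ^ 2 + (t + x) ^ 2 + (t + y) ^ 2 + t ^ 2 := by
    nlinarith [sq_nonneg (t + x + y + w + (t + x)), sq_nonneg (t + x + y + w + (t + y)),
      sq_nonneg (t + x + y + w - t), sq_nonneg (t + x - (t + y)), sq_nonneg (t + x + t),
      sq_nonneg (t + y + t)]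
  nlinarith [mul_le_mul_of_nonneg_left h4 (sq_nonneg δ)]

theorem tiltMat_gram (δ : ℝ) (h0 : 0 < δ) (h1 : δ ≤ 1) (a : A) (c : C) :
    ((tiltMat δ a c)ᴴ * tiltMat δ a c - (δ ^ 2 / 16) • (1 : Matrix (Bool × Bool) (Bool × Bool) ℂ)).PosSemidef := by
  have hH : ((tiltMat δ a c)ᴴ * tiltMat δ a c - (δ ^ 2 / 16) • (1 : Matrix (Bool × Bool) (Bool × Bool) ℂ)).IsHermitian := by
    refine (isHermitian_conjTranspose_mul_self _).sub ?_
    simp [IsHermitian, conjTranspose_smul]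
  refine PosSemidef.of_dotProduct_mulVec_nonneg hH fun z => ?_
  have key : star z ⬝ᵥ ((tiltMat δ a c)ᴴ * tiltMat δ a c - (δ ^ 2 / 16) • (1 : Matrix (Bool × Bool) (Bool × Bool) ℂ)) *ᵥ z
      = ((∑ l, Complex.normSq ((tiltMat δ a c *ᵥ z) l) - δ ^ 2 / 16 * ∑ S, Complex.normSq (z S) : ℝ) : ℂ) := by
    rw [sub_mulVec, dotProduct_sub, ← mulVec_mulVec, dotProduct_mulVec, ← star_mulVec,
      smul_mulVec, one_mulVec, dotProduct_smul]
    simp only [dotProduct, Pi.star_apply, RCLike.star_def, Complex.conj_mul', Complex.normSq_eq_norm_sq]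
    simp
  rw [key, Complex.zero_le_real, sub_nonneg]
  simp only [Complex.normSq_apply, ← sq, Finset.sum_add_distrib, mul_add]
  refine add_le_add ?_ ?_
  · refine (tilt_quad_real δ h0 h1 a c fun S => (z S).re).trans (le_of_eq ?_)
    simp [mulVec, dotProduct, tiltMat]
  · refine (tilt_quad_real δ h0 h1 a c fun S => (z S).im).trans (le_of_eq ?_)
    simp [mulVec, dotProduct, tiltMat]

end Tilt2

/-! ### The tilted intersection of four tests -/

section Tilt3
open Matrix
variable {D A C : Type*} [Fintype D] [DecidableEq D] [Fintype A] [DecidableEq A]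
  [Fintype C] [DecidableEq C]

/-- The block diagonal operator `∑ s, W s ⊗ |s⟩⟨s|`. -/
def blockMat {S : Type*} [DecidableEq S] (W : S → Matrix D D ℂ) : Matrix (D × S) (D × S) ℂ :=
  Matrix.of fun x y => if x.2 = y.2 then W x.2 x.1 y.1 else 0

theorem blockMat_mul {S : Type*} [Fintype S] [DecidableEq S] (V W : S → Matrix D D ℂ) :
    blockMat V * blockMat W = blockMat fun s => V s * W s := by
  ext ⟨d, s⟩ ⟨e, t⟩
  simp only [blockMat, mul_apply, of_apply, Fintype.sum_prod_type]
  by_cases h : s = t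
  · subst h
    simp
  · simp only [h, if_false]
    refine Finset.sum_eq_zero fun x _ => Finset.sum_eq_zero fun y _ => ?_
    by_cases h1 : s = y
    · subst h1; simp [h]
    · simp [h1]

theorem blockMat_conjTranspose {S : Type*} [DecidableEq S] (W : S → Matrix D D ℂ)
    (hW : ∀ s, (W s)ᴴ = W s) : (blockMat W)ᴴ = blockMat W := by
  ext ⟨d, s⟩ ⟨e, t⟩
  simp only [blockMat, conjTranspose_apply, of_apply]
  by_cases h : s = t
  · subst h
    simpa using congrFun (congrFun (hW s) d) e
  · simp [h, Ne.symm h]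

/-- Compression of a block diagonal operator by `h ↦ h ⊗ n`. -/
theorem blockMat_nonneg_aux {S : Type*} [Fintype S] [DecidableEq S] (W : S → Matrix D D ℂ) (n : S → ℝ) :
    (tensorVec n : Matrix (D × S) D ℂ)ᴴ * blockMat W * (tensorVec n : Matrix (D × S) D ℂ) =
      ∑ s, (n s ^ 2) • W s := by
  ext d e
  simp only [tensorVec, blockMat, mul_apply, conjTranspose_apply, of_apply, Fintype.sum_prod_type,
    Matrix.sum_apply, Matrix.smul_apply]
  rw [Finset.sum_eq_single e]
  · refine Finset.sum_congr rfl fun s _ => ?_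
    rw [Finset.sum_eq_single d]
    · rw [Finset.sum_eq_single s]
      · simp; ring
      · intro b _ hb; simp [hb]
      · simp
    · intro b _ hb; simp [hb]
    · simp
  · intro b _ hb; simp [hb]
  · simp

theorem blockMat_tensorVec_single {S : Type*} [Fintype S] [DecidableEq S] (W : S → Matrix D D ℂ) (s : S) :
    blockMat W * (tensorVec (Pi.single s 1) : Matrix (D × S) D ℂ) =
      (tensorVec (Pi.single s 1) : Matrix (D × S) D ℂ) * W s := by
  ext ⟨d, t⟩ e
  simp only [tensorVec, blockMat, mul_apply, of_apply, Fintype.sum_prod_type]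
  rw [Finset.sum_eq_single e, Finset.sum_eq_single d]
  · rw [Finset.sum_eq_single s]
    · by_cases h : t = s
      · subst h; simp
      · simp [h]
    · intro b _ hb; simp [hb]
    · simp
  · intro b _ hb; simp [hb.symm]
  · simp
  · intro b _ hb; simp [hb]
  · simp

theorem kron_tensorVec {L S : Type*} [Fintype L] [Fintype S] (T : Matrix L S ℝ) (n : S → ℝ) :
    ((1 : Matrix D D ℂ) ⊗ₖ T.map (fun x => (x : ℂ))) * (tensorVec n : Matrix (D × S) D ℂ) =
      tensorVec (T *ᵥ n) := by
  ext ⟨d, l⟩ e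
  simp only [tensorVec, mul_apply, of_apply, Fintype.sum_prod_type, kroneckerMap_apply, map_apply]
  rw [Finset.sum_eq_single e]
  · by_cases h : d = e
    · subst h; simp [mulVec, dotProduct]
    · simp [h]
  · intro b _ hb; simp [hb]
  · simp

theorem kron_conj_tensorVec {L S : Type*} [Fintype L] [Fintype S] (T : Matrix L S ℝ) (n : L → ℝ) :
    ((1 : Matrix D D ℂ) ⊗ₖ T.map (fun x => (x : ℂ)))ᴴ * (tensorVec n : Matrix (D × L) D ℂ) =
      tensorVec (Tᵀ *ᵥ n) := by
  rw [← kron_tensorVec, conjTranspose_kronecker, conjTranspose_one]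
  congr 2
  ext; simp

/-- Congruence `X ↦ Zᴴ X Z` by a possibly rectangular `Z` is monotone. -/
theorem conj_le_conj {m n : Type*} [Fintype m] [Fintype n] [DecidableEq m] [DecidableEq n] {X Y : Matrix m m ℂ}
    (h : X ≤ Y) (Z : Matrix m n ℂ) : Zᴴ * X * Z ≤ Zᴴ * Y * Z := by
  rw [Matrix.le_iff] at h ⊢
  rw [← Matrix.sub_mul, ← Matrix.mul_sub]
  exact h.conjTranspose_mul_mul_same Z

theorem tiltVec_nonneg {δ : ℝ} (h0 : 0 < δ) (a : A) (c : C) (S : Bool × Bool) (l) :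
    0 ≤ tiltVec δ a c S l := by
  unfold tiltVec; split_ifs <;> linarith

/-- The map `h ↦ h ⊗ t`, with `t` the restricted tilt vector. It is an isometry only up to `O(δ²)`. -/
abbrev tiltMap (D : Type*) [DecidableEq D] (δ : ℝ) (a : A) (c : C) (S : Bool × Bool) :
    Matrix (D × (Option A × Option C)) D ℂ :=
  tensorVec (tiltVec δ a c S)

theorem one_kron_sub {m n : Type*} (X Y : Matrix m n ℂ) :
    (1 : Matrix D D ℂ) ⊗ₖ (X - Y) = (1 : Matrix D D ℂ) ⊗ₖ X - (1 : Matrix D D ℂ) ⊗ₖ Y := by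
  ext
  simp [mul_sub]

/-- The tilted intersection of four tests with rejection projections `W S`. The test `Pi0` projects
onto the vectors supported on the labels of `(a, c)` and orthogonal to the four spaces
`range (W S) ⊗ t_S`. On the tilted output of any codeword `(a0, c0)` it accepts at most as
often, up to the factor `4`, as the single test of the class of `(a0, c0)`; on the tilted output of
`(a, c)` itself it rejects at most as often as the four tests together, up to `256 / δ²`. -/
theorem exists_tilted_test (δ : ℝ) (h0 : 0 < δ) (h1 : δ ≤ 1) (a : A) (c : C)
    (W : Bool × Bool → Matrix D D ℂ) (hW0 : ∀ S, 0 ≤ W S) (hW1 : ∀ S, W S ≤ 1)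
    (hWW : ∀ S, W S * W S = W S) :
    ∃ Pi0 : Matrix (D × (Option A × Option C)) (D × (Option A × Option C)) ℂ, 0 ≤ Pi0 ∧ Pi0 ≤ 1 ∧
      (∀ a0 c0, (tiltMap D δ a0 c0 (true, true))ᴴ * Pi0 * tiltMap D δ a0 c0 (true, true)
        ≤ (4 : ℝ) • (1 - W (decide (a0 = a), decide (c0 = c)))) ∧
      (tiltMap D δ a c (true, true))ᴴ * (1 - Pi0) * tiltMap D δ a c (true, true)
        ≤ (256 / δ ^ 2) • ∑ S, W S := by
  classical
  have hWh : ∀ S, (W S)ᴴ = W S := fun S => (nonneg_iff_posSemidef.1 (hW0 S)).1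
  set T : Matrix (Option A × Option C) (Bool × Bool) ℝ := Matrix.of fun l S => tiltVec δ a c S l with hT
  set M : Matrix (D × (Option A × Option C)) (D × (Bool × Bool)) ℂ :=
    (1 : Matrix D D ℂ) ⊗ₖ T.map (fun x => (x : ℂ)) with hM
  set Q : Matrix (D × (Option A × Option C)) (D × (Option A × Option C)) ℂ :=
    diagonal fun x => (outside a c x.2 : ℂ) with hQ
  have hTm : T.map (fun x => (x : ℂ)) = tiltMat δ a c := by
    ext; simp [T, tiltMat]
  have hWb : blockMat W * blockMat W = blockMat W := by
    rw [blockMat_mul]; simp only [hWW]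
  have hWbh : (blockMat W)ᴴ = blockMat W := blockMat_conjTranspose W hWh
  have hQQ : Q * Q = Q := by
    rw [hQ, diagonal_mul_diagonal]
    congr 1; ext x
    rcases tilt_outside δ a c (true, true) x.2 with h | h
    · simp [h]
    · simp [h.1]
  have hQh : Qᴴ = Q := by
    rw [hQ, diagonal_conjTranspose]
    congr 1; ext x; simp
  have hQt : ∀ S, Q * (tensorVec (tiltVec δ a c S) : Matrix (D × (Option A × Option C)) D ℂ) = 0 := by
    intro S
    ext x d
    rw [hQ, diagonal_mul]
    rcases tilt_outside δ a c S x.2 with h | h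
    · simp [h]
    · simp [tensorVec, h.2]
  have hQM : Q * M = 0 := by
    ext x y
    rw [hQ, diagonal_mul, hM]
    rcases tilt_outside δ a c y.2 x.2 with h | h
    · simp [h]
    · simp [T, h.2]
  have hMQ : Mᴴ * Q = 0 := by
    rw [← hQh, ← conjTranspose_mul, hQM, conjTranspose_zero]
  have hMM : (δ ^ 2 / 16) • (1 : Matrix (D × (Bool × Bool)) (D × (Bool × Bool)) ℂ) ≤ Mᴴ * M := by
    rw [Matrix.le_iff, hM, conjTranspose_kronecker, conjTranspose_one, ← mul_kronecker_mul,
      Matrix.mul_one, ← one_kronecker_one, ← kronecker_smul, ← one_kron_sub, hTm]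
    exact PosSemidef.one.kronecker (tiltMat_gram δ h0 h1 a c)
  -- the columns of `V` span the tilted rejection spaces, and `Q` projects onto the foreign labels;
  -- the test is the projection onto the kernel of `V Vᴴ + Q`
  set V := M * blockMat W with hV
  have hVV : V * Vᴴ = M * blockMat W * Mᴴ := by
    rw [hV, conjTranspose_mul, hWbh, ← Matrix.mul_assoc, Matrix.mul_assoc M, hWb]
  have hG00 : 0 ≤ V * Vᴴ := nonneg_iff_posSemidef.2 (posSemidef_self_mul_conjTranspose _)
  have hQ0 : 0 ≤ Q := by
    rw [nonneg_iff_posSemidef, ← hQQ]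
    nth_rewrite 2 [← hQh]
    exact posSemidef_self_mul_conjTranspose _
  set G := V * Vᴴ + Q with hG
  have hG0 : 0 ≤ G := add_nonneg hG00 hQ0
  have hQV : Q * V = 0 := by rw [hV, ← Matrix.mul_assoc, hQM, Matrix.zero_mul]
  have hVQ : Vᴴ * Q = 0 := by rw [← hQh, ← conjTranspose_mul, hQV, conjTranspose_zero]
  have hGG : (δ ^ 2 / 16) • G ≤ G * G := by
    have e : G * G = V * (Vᴴ * V) * Vᴴ + Q := by
      rw [hG, Matrix.mul_add, Matrix.add_mul, Matrix.add_mul, hQQ, ← Matrix.mul_assoc Q, hQV,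
        Matrix.mul_assoc V Vᴴ Q, hVQ]
      simp [Matrix.mul_assoc]
    rw [e, hG, smul_add]
    refine add_le_add ?_ ?_
    · have e2 : V * (Vᴴ * V) * Vᴴ = Vᴴᴴ * (Mᴴ * M) * Vᴴ := by
        have e3 : V * (Vᴴ * V) * Vᴴ = (V * blockMat W) * (Mᴴ * M) * (blockMat W * Vᴴ) := by
          rw [hV, conjTranspose_mul, hWbh]
          simp only [Matrix.mul_assoc]
        have e4 : V * blockMat W = V := by rw [hV, Matrix.mul_assoc, hWb]
        have e5 : blockMat W * Vᴴ = Vᴴ := by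
          rw [← hWbh, ← conjTranspose_mul, e4]
        rw [e3, e4, e5, conjTranspose_conjTranspose]
      rw [e2]
      refine le_trans (le_of_eq ?_) (conj_le_conj hMM Vᴴ)
      simp
    · refine (smul_le_smul_of_nonneg_right (?_ : δ ^ 2 / 16 ≤ 1) hQ0).trans (by rw [one_smul])
      nlinarith
  obtain ⟨P, hP0, hP1, hPG, hP⟩ := kernel_proj G (Matrix.finite_real_spectrum) hG0
    (c := δ ^ 2 / 16) (by positivity) hGG
  have hPh : Pᴴ = P := (nonneg_iff_posSemidef.1 hP0).1
  have hsum : P * (V * Vᴴ) * P + P * Q * P = 0 := by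
    rw [← Matrix.add_mul, ← Matrix.mul_add, ← hG, hPG, Matrix.zero_mul]
  have hA0 : 0 ≤ P * (V * Vᴴ) * P := by
    have := conj_le_conj hG00 P
    rwa [hPh, Matrix.mul_zero, Matrix.zero_mul] at this
  have hB0 : 0 ≤ P * Q * P := by
    have := conj_le_conj hQ0 P
    rwa [hPh, Matrix.mul_zero, Matrix.zero_mul] at this
  have hPV : P * V = 0 := by
    rw [← Matrix.self_mul_conjTranspose_eq_zero, conjTranspose_mul, hPh]
    have := ((add_eq_zero_iff_of_nonneg hA0 hB0).1 hsum).1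
    simpa [Matrix.mul_assoc] using this
  have hPQ : P * Q = 0 := by
    rw [← Matrix.self_mul_conjTranspose_eq_zero, conjTranspose_mul, hPh, hQh]
    have := ((add_eq_zero_iff_of_nonneg hA0 hB0).1 hsum).2
    rw [← Matrix.mul_assoc, Matrix.mul_assoc P Q Q, hQQ, this]
  have hMs : ∀ S, M * (tensorVec (Pi.single S 1) : Matrix (D × (Bool × Bool)) D ℂ)
      = tiltMap D δ a c S := by
    intro S
    rw [hM, kron_tensorVec]
    congr 1
    ext l
    simp [T]
  have hPJ : ∀ S, P * tiltMap D δ a c S * W S = 0 := by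
    intro S
    rw [← hMs, Matrix.mul_assoc, Matrix.mul_assoc, ← blockMat_tensorVec_single, ← Matrix.mul_assoc M,
      ← hV, ← Matrix.mul_assoc, hPV, Matrix.zero_mul]
  have hle4 : ∀ S, ∑ l, tiltVec δ a c S l * tiltVec δ a c (true, true) l ≤ 4 := by
    intro S
    rw [sum_tilt_mul_full]
    have : δ ^ 2 ≤ 1 := by nlinarith
    have h2 := sq_nonneg δ
    split_ifs <;> linarith
  refine ⟨P, hP0, hP1, fun a0 c0 => ?_, ?_⟩
  · set S : Bool × Bool := (decide (a0 = a), decide (c0 = c)) with hS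
    set Z : Matrix (D × (Option A × Option C)) D ℂ := tensorVec (tiltVec δ a c S) with hZ
    set J : Matrix (D × (Option A × Option C)) D ℂ := tensorVec (tiltVec δ a0 c0 (true, true)) with hJ
    have hJZ : J = Z + Q * J := by
      ext x d
      rw [Matrix.add_apply, hQ, diagonal_mul, hJ, hZ, hS]
      simp only [tensorVec, of_apply]
      by_cases h : x.1 = d
      · simp only [h, if_true]
        exact_mod_cast tilt_split δ a a0 c c0 x.2
      · simp [h]
    have hPJZ : P * J = P * Z := by
      conv_lhs => rw [hJZ, Matrix.mul_add, ← Matrix.mul_assoc, hPQ, Matrix.zero_mul, add_zero]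
    have hJPZ : Jᴴ * P = Zᴴ * P := by
      have := congrArg conjTranspose hPJZ
      simpa [conjTranspose_mul, hPh] using this
    have hX : Jᴴ * P * J = Zᴴ * P * Z := by
      rw [hJPZ, Matrix.mul_assoc, hPJZ, Matrix.mul_assoc]
    have hXW : (Zᴴ * P * Z) * W S = 0 := by
      rw [Matrix.mul_assoc, Matrix.mul_assoc, ← Matrix.mul_assoc P, hPJ, Matrix.mul_zero]
    have hWX : W S * (Zᴴ * P * Z) = 0 := by
      have := congrArg conjTranspose hXW
      simpa [conjTranspose_mul, hPh, hWh, Matrix.mul_assoc] using this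
    have hcomp : Zᴴ * P * Z = (1 - W S)ᴴ * (Zᴴ * P * Z) * (1 - W S) := by
      rw [conjTranspose_sub, conjTranspose_one, hWh, Matrix.sub_mul, hWX, Matrix.mul_sub, Matrix.one_mul, sub_zero,
        hXW, Matrix.mul_one, sub_zero]
    rw [hX, hcomp]
    have hZ4 : Zᴴ * P * Z ≤ (4 : ℝ) • 1 := by
      refine (conj_le_conj hP1 Z).trans ?_
      rw [Matrix.mul_one, hZ, tensorVec_star_mul, sum_tilt_mul_self]
      exact smul_le_smul_of_nonneg_right (hle4 S) zero_le_one
    refine (conj_le_conj hZ4 _).trans (le_of_eq ?_)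
    rw [conjTranspose_sub, conjTranspose_one, hWh, Matrix.mul_smul, Matrix.mul_one, Matrix.smul_mul]
    congr 1
    rw [Matrix.mul_sub, Matrix.sub_mul, Matrix.sub_mul, hWW]
    simp
  · refine (conj_le_conj hP _).trans ?_
    rw [Matrix.mul_smul, Matrix.smul_mul, hG, Matrix.mul_add, Matrix.add_mul,
      Matrix.mul_assoc _ Q, hQt, Matrix.mul_zero, add_zero, hVV]
    have e1 : (tiltMap D δ a c (true, true))ᴴ * (M * blockMat W * Mᴴ) * tiltMap D δ a c (true, true)
        = (Mᴴ * tiltMap D δ a c (true, true))ᴴ * blockMat W * (Mᴴ * tiltMap D δ a c (true, true)) := by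
      rw [conjTranspose_mul, conjTranspose_conjTranspose]
      simp only [Matrix.mul_assoc]
    rw [e1, hM, kron_conj_tensorVec, blockMat_nonneg_aux]
    have e2 : (256 / δ ^ 2) • ∑ S, W S = (δ ^ 2 / 16)⁻¹ • ∑ S, (16 : ℝ) • W S := by
      rw [← Finset.smul_sum, smul_smul]
      congr 1
      field_simp
      norm_num
    rw [e2]
    refine smul_le_smul_of_nonneg_left (Finset.sum_le_sum fun S _ => ?_) (by positivity)
    refine smul_le_smul_of_nonneg_right ?_ (hW0 S)
    have e3 : (Tᵀ *ᵥ tiltVec δ a c (true, true)) S = ∑ l, tiltVec δ a c S l * tiltVec δ a c (true, true) l := by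
      simp [mulVec, dotProduct, T]
    rw [e3]
    have n0 : 0 ≤ ∑ l, tiltVec δ a c S l * tiltVec δ a c (true, true) l :=
      Finset.sum_nonneg fun l _ => mul_nonneg (tiltVec_nonneg h0 _ _ _ _) (tiltVec_nonneg h0 _ _ _ _)
    nlinarith [hle4 S]

end Tilt3

/-! ### The decoder of one receiver -/

section Tilt4
open Matrix
variable {D A B C : Type*} [Fintype D] [DecidableEq D] [Fintype A] [DecidableEq A]
  [Fintype B] [DecidableEq B] [Fintype C] [DecidableEq C]

/-- A consequence of the parallelogram law for the seminorm given by `X`. -/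
theorem conj_add_le {m n : Type*} [Fintype m] [Fintype n] [DecidableEq m] [DecidableEq n]
    {X : Matrix m m ℂ} (h : 0 ≤ X) (Y Z : Matrix m n ℂ) :
    (Y - Z)ᴴ * X * (Y - Z) ≤ (2 : ℝ) • (Yᴴ * X * Y) + (2 : ℝ) • (Zᴴ * X * Z) := by
  have := conj_le_conj h (Y + Z)
  rw [Matrix.mul_zero, Matrix.zero_mul] at this
  rw [← sub_nonneg]
  convert this using 1
  simp only [two_smul, conjTranspose_add, conjTranspose_sub, Matrix.add_mul, Matrix.sub_mul,
    Matrix.mul_add, Matrix.mul_sub]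
  abel

/-- The decoder of one receiver for a fixed pair of codebooks. Here `E S a b c` is the test for the
candidate `(a, b, c)` designed against the error class `S`. For the true triple `(a, b, c)`, the error
is bounded by the rejections of the four tests at this triple and, for every candidate with
`(a', b') ≠ (a, b)`, by the acceptance of the one test matching the class of that candidate. -/
theorem receiver_decoder (E : Bool × Bool → A → B → C → Matrix D D ℂ)
    (hE0 : ∀ S a b c, 0 ≤ E S a b c) (hE1 : ∀ S a b c, E S a b c ≤ 1)
    (δ : ℝ) (h0 : 0 < δ) (h1 : δ ≤ 1) (K : ℝ) (hK : 0 < K) :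
    ∃ L : A × B → Matrix D D ℂ, (∀ m, 0 ≤ L m) ∧ ∑ m, L m ≤ 1 ∧ ∀ a b c,
      1 - L (a, b) ≤ (6 * δ ^ 2 + 48 / K) • (1 : Matrix D D ℂ)
        + (2048 / δ ^ 2) • ∑ S, (1 - E S a b c)
        + (64 * K) • ∑ m ∈ Finset.univ.erase (a, b), ∑ c',
            E (decide (a = m.1), decide (c = c')) m.1 m.2 c' := by
  choose W hW0 hW1 hWW hWE hEW using fun S a b c =>
    half_proj (E S a b c) Matrix.finite_real_spectrum (hE0 S a b c) (hE1 S a b c)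
  choose P hP0 hP1 hPs hPc using fun a b c => exists_tilted_test δ h0 h1 a c (fun S => W S a b c)
    (fun S => hW0 S a b c) (fun S => hW1 S a b c) (fun S => hWW S a b c)
  obtain ⟨L, hL0, hL1, hL⟩ := nonunique_decoder (fun (m : A × B) c => P m.1 m.2 c)
    (fun m c => hP0 _ _ _) (fun m c => hP1 _ _ _) hK
  set J0 : Matrix (D × (Option A × Option C)) D ℂ := tensorVec baseVec with hJ0
  have hJJ : J0ᴴ * J0 = 1 := by
    rw [hJ0, tensorVec_star_mul, sum_base_mul_self, one_smul]
  refine ⟨fun m => J0ᴴ * L m * J0, fun m => ?_, ?_, fun a b c => ?_⟩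
  · simpa using conj_le_conj (hL0 m) J0
  · have : ∑ m, J0ᴴ * L m * J0 = J0ᴴ * (∑ m, L m) * J0 := by
      rw [Matrix.mul_sum, Matrix.sum_mul]
    rw [this]
    refine (conj_le_conj hL1 J0).trans (le_of_eq ?_)
    rw [Matrix.mul_one, hJJ]
  set X := 1 - L (a, b) with hX
  have hX0 : 0 ≤ X := by
    rw [hX, sub_nonneg]
    exact (Finset.single_le_sum (fun i _ => hL0 i) (Finset.mem_univ _)).trans hL1
  have hX1 : X ≤ 1 := by
    rw [hX]; exact sub_le_self _ (hL0 _)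
  set J := tiltMap D δ a c (true, true) with hJ
  have e1 : 1 - J0ᴴ * L (a, b) * J0 = J0ᴴ * X * J0 := by
    rw [hX, Matrix.mul_sub, Matrix.sub_mul, Matrix.mul_one, hJJ]
  have e2 : J0 = J - (J - J0) := by abel
  have e3 : (J - J0)ᴴ * X * (J - J0) ≤ (3 * δ ^ 2) • 1 := by
    refine (conj_le_conj hX1 _).trans (le_of_eq ?_)
    have : J - J0 = tensorVec (fun l => tiltVec δ a c (true, true) l - baseVec l) := by
      rw [tensorVec_sub]
    rw [this, Matrix.mul_one, tensorVec_star_mul, sum_tilt_sub_base]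
  have e4 : Jᴴ * J ≤ (4 : ℝ) • 1 := by
    rw [hJ, tensorVec_star_mul, sum_tilt_mul_full]
    refine smul_le_smul_of_nonneg_right ?_ zero_le_one
    simp
    nlinarith
  have e5 : Jᴴ * X * J ≤ (24 / K) • (1 : Matrix D D ℂ) + (1024 / δ ^ 2) • ∑ S, (1 - E S a b c)
      + (32 * K) • ∑ m ∈ Finset.univ.erase (a, b), ∑ c',
            E (decide (a = m.1), decide (c = c')) m.1 m.2 c' := by
    refine (conj_le_conj (hL (a, b) c) J).trans ?_
    simp only [Matrix.mul_add, Matrix.add_mul, Matrix.mul_smul, Matrix.smul_mul, Matrix.mul_one]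
    refine add_le_add (add_le_add ?_ ?_) ?_
    · refine (smul_le_smul_of_nonneg_left e4 (by positivity)).trans (le_of_eq ?_)
      rw [smul_smul]; congr 1; ring
    · refine (smul_le_smul_of_nonneg_left (hPc a b c) (by norm_num)).trans ?_
      have : ∑ S, W S a b c ≤ (2 : ℝ) • ∑ S, (1 - E S a b c) := by
        rw [Finset.smul_sum]
        exact Finset.sum_le_sum fun S _ => hWE S a b c
      rw [smul_smul]
      refine (smul_le_smul_of_nonneg_left this (by positivity)).trans (le_of_eq ?_)
      rw [smul_smul]; congr 1; ring
    · rw [show 32 * K = 4 * K * 8 by ring, mul_smul (4 * K) 8]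
      refine smul_le_smul_of_nonneg_left ?_ (by positivity)
      simp only [Matrix.mul_sum, Matrix.sum_mul, Finset.smul_sum]
      refine Finset.sum_le_sum fun m _ => Finset.sum_le_sum fun c' _ => ?_
      refine (hPs m.1 m.2 c' a c).trans ?_
      refine (smul_le_smul_of_nonneg_left (hEW _ _ _ _) (by norm_num : (0:ℝ) ≤ 4)).trans (le_of_eq ?_)
      rw [smul_smul]; norm_num
  -- replace the untilted label `J0` by the tilted `J`, which differs from it by `O(δ)`
  rw [e1]
  conv_lhs => rw [e2]
  refine (conj_add_le hX0 _ _).trans ?_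
  refine (add_le_add (smul_le_smul_of_nonneg_left e5 zero_le_two)
    (smul_le_smul_of_nonneg_left e3 zero_le_two)).trans (le_of_eq ?_)
  rw [show 48 / K = 2 * (24 / K) by ring, show 2048 / δ ^ 2 = 2 * (1024 / δ ^ 2) by ring]
  module

end Tilt4

/-! ### The trace pairing -/

section Pair
open Matrix
variable {D : Type*} [Fintype D] [DecidableEq D]

/-- The real part of the trace pairing `Tr[M N]`. -/
noncomputable def hsPair (M N : Matrix D D ℂ) : ℝ := ((M * N).trace).re

theorem hsPair_add (M M' N : Matrix D D ℂ) : hsPair (M + M') N = hsPair M N + hsPair M' N := by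
  simp [hsPair, Matrix.add_mul]

theorem hsPair_sub (M M' N : Matrix D D ℂ) : hsPair (M - M') N = hsPair M N - hsPair M' N := by
  simp [hsPair, Matrix.sub_mul]

theorem hsPair_smul (r : ℝ) (M N : Matrix D D ℂ) : hsPair (r • M) N = r * hsPair M N := by
  simp [hsPair]

theorem hsPair_sum {ι : Type*} (s : Finset ι) (M : ι → Matrix D D ℂ) (N : Matrix D D ℂ) :
    hsPair (∑ i ∈ s, M i) N = ∑ i ∈ s, hsPair (M i) N := by
  simp [hsPair, Matrix.sum_mul, trace_sum]

theorem hsPair_smul_right (r : ℝ) (M N : Matrix D D ℂ) : hsPair M ((r : ℂ) • N) = r * hsPair M N := by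
  simp [hsPair]

theorem hsPair_sum_right {ι : Type*} (s : Finset ι) (M : Matrix D D ℂ) (N : ι → Matrix D D ℂ) :
    hsPair M (∑ i ∈ s, N i) = ∑ i ∈ s, hsPair M (N i) := by
  simp [hsPair, Matrix.mul_sum, trace_sum]

theorem hsPair_nonneg {M N : Matrix D D ℂ} (hM : 0 ≤ M) (hN : 0 ≤ N) : 0 ≤ hsPair M N := by
  obtain ⟨B, rfl⟩ := CStarAlgebra.nonneg_iff_eq_star_mul_self.1 hM
  have h := conj_le_conj hN Bᴴ
  rw [Matrix.mul_zero, Matrix.zero_mul, conjTranspose_conjTranspose, nonneg_iff_posSemidef] at h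
  have e : (star B * B * N).trace = (B * N * Bᴴ).trace := by
    rw [star_eq_conjTranspose, Matrix.mul_assoc, Matrix.trace_mul_comm]
  have := h.trace_nonneg
  rw [hsPair, e]
  exact (Complex.le_def.1 this).1

theorem hsPair_mono {M M' N : Matrix D D ℂ} (hM : M ≤ M') (hN : 0 ≤ N) :
    hsPair M N ≤ hsPair M' N := by
  have := hsPair_nonneg (sub_nonneg.2 hM) hN
  rw [hsPair_sub] at this
  linarith

end Pair

/-! ### Random superposition codes -/

section Codebook

/-- Fubini for product weights on a finite function space. -/
theorem sum_pi_prod {ι S : Type*} [Fintype ι] [DecidableEq ι] [Fintype S]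
    (φ : ι → S → ℝ) : ∑ g : ι → S, ∏ i, φ i (g i) = ∏ i, ∑ s, φ i s := by
  rw [Finset.prod_univ_sum, Fintype.piFinset_univ]

/-- One coordinate of an i.i.d. family with law `μ` has law `μ`. -/
theorem sum_pi_single {ι S : Type*} [Fintype ι] [DecidableEq ι] [Fintype S]
    (μ : S → ℝ) (hμ : ∑ s, μ s = 1) (i : ι) (f : S → ℝ) :
    ∑ g : ι → S, (∏ k, μ (g k)) * f (g i) = ∑ s, μ s * f s := by
  have h := sum_pi_prod (fun (k : ι) s => if k = i then μ s * f s else μ s)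
  have e1 : ∀ g : ι → S, ∏ k, (if k = i then μ (g k) * f (g k) else μ (g k)) =
      (∏ k, μ (g k)) * f (g i) := by
    intro g
    have : ∀ k, (if k = i then μ (g k) * f (g k) else μ (g k)) = μ (g k) * (if k = i then f (g k) else 1) := by
      intro k; split_ifs <;> simp
    simp only [this, Finset.prod_mul_distrib, Finset.prod_ite_eq', Finset.mem_univ, if_true]
  have e2 : ∀ k : ι, ∑ s, (if k = i then μ s * f s else μ s) = if k = i then ∑ s, μ s * f s else 1 := by
    intro k; split_ifs <;> simp [hμ]
  simp only [e1, e2, Finset.prod_ite_eq', Finset.mem_univ, if_true] at h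
  exact h

/-- Two distinct coordinates of an i.i.d. family with law `μ` are independent. -/
theorem sum_pi_pair {ι S : Type*} [Fintype ι] [DecidableEq ι] [Fintype S]
    (μ : S → ℝ) (hμ : ∑ s, μ s = 1) (i j : ι) (hij : i ≠ j) (f : S → S → ℝ) :
    ∑ g : ι → S, (∏ k, μ (g k)) * f (g i) (g j) = ∑ s, ∑ t, μ s * μ t * f s t := by
  classical
  have key : ∀ (F G : S → ℝ), ∑ g : ι → S, (∏ k, μ (g k)) * (F (g i) * G (g j)) =
      (∑ s, μ s * F s) * ∑ t, μ t * G t := by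
    intro F G
    have h := sum_pi_prod (fun (k : ι) s => μ s * ((if k = i then F s else 1) * (if k = j then G s else 1)))
    have e1 : ∀ g : ι → S, ∏ k, (μ (g k) * ((if k = i then F (g k) else 1) * (if k = j then G (g k) else 1))) =
        (∏ k, μ (g k)) * (F (g i) * G (g j)) := by
      intro g
      simp only [Finset.prod_mul_distrib, Finset.prod_ite_eq', Finset.mem_univ, if_true]
    have e2 : ∀ k : ι, ∑ s, μ s * ((if k = i then F s else 1) * (if k = j then G s else 1)) =
        (if k = i then ∑ s, μ s * F s else 1) * (if k = j then ∑ s, μ s * G s else 1) := by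
      intro k
      by_cases h1 : k = i
      · have h2 : k ≠ j := fun h => hij (h1.symm.trans h)
        simp [h1, hij]
      · by_cases h2 : k = j
        · simp [h2, hij.symm]
        · simp [h1, h2, hμ]
    simp only [e1, e2, Finset.prod_mul_distrib, Finset.prod_ite_eq', Finset.mem_univ, if_true] at h
    exact h
  calc ∑ g : ι → S, (∏ k, μ (g k)) * f (g i) (g j)
      = ∑ s0, ∑ t0, f s0 t0 * ∑ g : ι → S, (∏ k, μ (g k)) *
          ((if g i = s0 then 1 else 0) * (if g j = t0 then 1 else 0)) := by
        have e3 : ∀ g : ι → S, (∏ k, μ (g k)) * f (g i) (g j) = ∑ s0, ∑ t0, f s0 t0 *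
            ((∏ k, μ (g k)) * ((if g i = s0 then 1 else 0) * (if g j = t0 then 1 else 0))) := by
          intro g; simp [mul_comm]
        simp only [e3]
        rw [Finset.sum_comm]
        refine Finset.sum_congr rfl fun s _ => ?_
        rw [Finset.sum_comm]
        refine Finset.sum_congr rfl fun t _ => ?_
        rw [Finset.mul_sum]
    _ = _ := by
        refine Finset.sum_congr rfl fun s _ => Finset.sum_congr rfl fun t _ => ?_
        rw [key (fun x => if x = s then 1 else 0) (fun x => if x = t then 1 else 0)]
        simp
        ring

variable {U X A B : Type*} [Fintype U] [DecidableEq U] [Fintype X]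

/-- The joint law of the codewords of two different messages of one sender: conditionally independent
given `u` if the common parts are the same, and independent otherwise. Where the marginal of `u`
vanishes, so does the numerator, and the junk value `0 / 0 = 0` is the right one. -/
noncomputable def pairLaw (p : U × X → ℝ) (same : Bool) (s t : U × X) : ℝ :=
  if same then (if s.1 = t.1 then p s * p t / ∑ x, p (s.1, x) else 0) else p s * p t

/-- The joint law of the codeword of one message and the cloud centre `u` of a second common index. -/
noncomputable def coarseLaw (p : U × X → ℝ) (same : Bool) (s : U × X) (t : U) : ℝ :=
  if same then (if s.1 = t then p s else 0) else p s * ∑ x, p (t, x)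

/-- A random superposition code: a distribution `μ` on a finite set `G` of codebooks with cloud centres
`u` and satellites `x`, through its one- and two-message marginals. -/
structure IsSuperCode [DecidableEq A] (p : U × X → ℝ) {G : Type*} [Fintype G] (μ : G → ℝ)
    (u : G → A → U) (x : G → A → B → X) : Prop where
  nonneg : ∀ g, 0 ≤ μ g
  total : ∑ g, μ g = 1
  single : ∀ a b (f : U × X → ℝ), ∑ g, μ g * f (u g a, x g a b) = ∑ s, p s * f s
  pair : ∀ a b a' b', (a, b) ≠ (a', b') → ∀ f : U × X → U × X → ℝ,
    ∑ g, μ g * f (u g a, x g a b) (u g a', x g a' b') =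
      ∑ s, ∑ t, pairLaw p (decide (a = a')) s t * f s t

theorem IsSuperCode.coarse [DecidableEq A] {p : U × X → ℝ} {G : Type*} [Fintype G] {μ : G → ℝ}
    {u : G → A → U} {x : G → A → B → X} (h : IsSuperCode p μ u x) (a : A) (b : B) (a' : A)
    (f : U × X → U → ℝ) : ∑ g, μ g * f (u g a, x g a b) (u g a') =
      ∑ s, ∑ t, coarseLaw p (decide (a = a')) s t * f s t := by
  by_cases haa : a = a'
  · subst haa
    rw [h.single a b (fun s => f s s.1)]
    refine Finset.sum_congr rfl fun s _ => ?_
    simp [coarseLaw]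
  · rw [h.pair a b a' b (by simp [haa]) (fun s t => f s t.1)]
    refine Finset.sum_congr rfl fun s _ => ?_
    simp [coarseLaw, pairLaw, haa, Fintype.sum_prod_type, Finset.mul_sum, Finset.sum_mul]

/-- Superposition codes exist: the common indices carry independent pairs `(u, (x_b)_b)`, with the `x_b`
conditionally independent given `u`. -/
theorem exists_superCode [Fintype A] [DecidableEq A] [Fintype B] [DecidableEq B] [DecidableEq X] (p : U × X → ℝ) (hp : ∀ s, 0 ≤ p s) (hp1 : ∑ s, p s = 1) :
    ∃ μ : (A → U × (B → X)) → ℝ, IsSuperCode p μ (fun g a => (g a).1) (fun g a b => (g a).2 b) := by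
  set pb : U → ℝ := fun u => ∑ x, p (u, x) with hpb
  have hpb0 : ∀ u, 0 ≤ pb u := fun u => Finset.sum_nonneg fun x _ => hp _
  have hz : ∀ u x, pb u = 0 → p (u, x) = 0 := by
    intro u x h
    exact (Finset.sum_eq_zero_iff_of_nonneg fun x _ => hp (u, x)).1 h x (Finset.mem_univ _)
  -- the law of one cloud: centre and satellites
  set ν : U × (B → X) → ℝ := fun s => pb s.1 * ∏ b, (p (s.1, s.2 b) / pb s.1) with hν
  have hν0 : ∀ s, 0 ≤ ν s := fun s =>
    mul_nonneg (hpb0 _) (Finset.prod_nonneg fun b _ => div_nonneg (hp _) (hpb0 _))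
  have hc : ∀ u, pb u ≠ 0 → ∑ x, p (u, x) / pb u = 1 := by
    intro u hu
    rw [← Finset.sum_div]; exact div_self hu
  have hsum : ∀ f : U × (B → X) → ℝ, ∑ s, ν s * f s =
      ∑ u, pb u * ∑ xs : B → X, (∏ b, (p (u, xs b) / pb u)) * f (u, xs) := by
    intro f
    rw [Fintype.sum_prod_type]
    refine Finset.sum_congr rfl fun u _ => ?_
    rw [Finset.mul_sum]
    refine Finset.sum_congr rfl fun xs _ => ?_
    simp only [hν]; ring
  have s1 : ∀ b (f : U × X → ℝ), ∑ s, ν s * f (s.1, s.2 b) = ∑ s, p s * f s := by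
    intro b f
    rw [hsum (fun s => f (s.1, s.2 b)), Fintype.sum_prod_type]
    refine Finset.sum_congr rfl fun u _ => ?_
    by_cases hu : pb u = 0
    · simp [hu, hz u _ hu]
    · rw [sum_pi_single (fun x => p (u, x) / pb u) (hc u hu) b (fun x => f (u, x)), Finset.mul_sum]
      refine Finset.sum_congr rfl fun x _ => ?_
      field_simp
  have hν1 : ∑ s, ν s = 1 := by
    have := hsum (fun _ => 1)
    simp only [mul_one] at this
    rw [this, ← hp1, Fintype.sum_prod_type]
    refine Finset.sum_congr rfl fun u _ => ?_
    by_cases hu : pb u = 0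
    · simp [hu, hz u _ hu]
    · rw [sum_pi_prod (fun (_ : B) x => p (u, x) / pb u)]
      simp only [hc u hu, Finset.prod_const_one, mul_one]
      rfl
  have s2 : ∀ b b', b ≠ b' → ∀ f : U × X → U × X → ℝ, ∑ s, ν s * f (s.1, s.2 b) (s.1, s.2 b') =
      ∑ s, ∑ t, pairLaw p true s t * f s t := by
    intro b b' hb f
    rw [hsum (fun s => f (s.1, s.2 b) (s.1, s.2 b')), Fintype.sum_prod_type]
    refine Finset.sum_congr rfl fun u _ => ?_
    by_cases hu : pb u = 0
    · simp [hu, pairLaw, hz u _ hu]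
    · rw [sum_pi_pair (fun x => p (u, x) / pb u) (hc u hu) b b' hb (fun x y => f (u, x) (u, y)),
        Finset.mul_sum]
      refine Finset.sum_congr rfl fun x _ => ?_
      rw [Fintype.sum_prod_type, Finset.sum_eq_single u]
      · rw [Finset.mul_sum]
        refine Finset.sum_congr rfl fun y _ => ?_
        simp only [pairLaw, if_true, hpb] at hu ⊢
        field_simp
      · intro v _ hv; simp [pairLaw, hv.symm]
      · simp
  refine ⟨fun g => ∏ a, ν (g a), fun g => Finset.prod_nonneg fun a _ => hν0 _, ?_, ?_, ?_⟩
  · rw [sum_pi_prod (fun (_ : A) s => ν s)]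
    simp [hν1]
  · intro a b f
    rw [sum_pi_single ν hν1 a (fun s => f (s.1, s.2 b)), s1]
  · intro a b a' b' hne f
    by_cases ha : a = a'
    · subst ha
      have hb : b ≠ b' := fun h => hne (by rw [h])
      rw [sum_pi_single ν hν1 a (fun s => f (s.1, s.2 b) (s.1, s.2 b')), s2 b b' hb]
      simp
    · rw [sum_pi_pair ν hν1 a a' ha (fun s t => f (s.1, s.2 b) (t.1, t.2 b'))]
      have : ∀ s : U × (B → X), ∑ t, ν s * ν t * f (s.1, s.2 b) (t.1, t.2 b') =
          ν s * ∑ t, p t * f (s.1, s.2 b) t := by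
        intro s
        rw [← s1 b' (fun t => f (s.1, s.2 b) t), Finset.mul_sum]
        simp only [mul_assoc]
      simp only [this]
      rw [s1 b (fun s => ∑ t, p t * f s t)]
      simp only [Finset.mul_sum, pairLaw, ha, decide_false, Bool.false_eq_true, if_false, mul_assoc]

end Codebook

/-! ### The decoding error averaged over superposition codes -/

section Recv
open Matrix
variable {D : Type*} [Fintype D] [DecidableEq D] {U X V Y : Type*} [Fintype U] [DecidableEq U]
  [Fintype X] [Fintype V] [DecidableEq V] [Fintype Y]

/-- The probability that the test `P` rejects the true codeword. The laws `p` of the own sender and `r` of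
the other sender are fixed, and `ω x y` is the output for the inputs `x` and `y`. -/
noncomputable def missErr (p : U × X → ℝ) (r : V × Y → ℝ) (P : U → X → V → Matrix D D ℂ)
    (ω : X → Y → Matrix D D ℂ) : ℝ :=
  ∑ s, p s * ∑ t, r t * hsPair (1 - P s.1 s.2 t.1) (ω s.2 t.2)

/-- The probability that the test `P` accepts a wrong candidate of the error class `S`. -/
noncomputable def confErr (p : U × X → ℝ) (r : V × Y → ℝ) (S : Bool × Bool)
    (P : U → X → V → Matrix D D ℂ) (ω : X → Y → Matrix D D ℂ) : ℝ :=
  ∑ s, ∑ t, pairLaw p S.1 s t * ∑ s', ∑ t', coarseLaw r S.2 s' t' *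
    hsPair (P t.1 t.2 t') (ω s.2 s'.2)

/-- The average of `F` over the two independent codebooks. -/
noncomputable def avg2 {G1 G2 : Type*} [Fintype G1] [Fintype G2] (μ1 : G1 → ℝ) (μ2 : G2 → ℝ)
    (F : G1 → G2 → ℝ) : ℝ := ∑ g1, ∑ g2, μ1 g1 * (μ2 g2 * F g1 g2)

section avg
variable {G1 G2 : Type*} [Fintype G1] [Fintype G2] (μ1 : G1 → ℝ) (μ2 : G2 → ℝ)

theorem avg2_add (F H : G1 → G2 → ℝ) :
    avg2 μ1 μ2 (fun a b => F a b + H a b) = avg2 μ1 μ2 F + avg2 μ1 μ2 H := by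
  simp only [avg2, mul_add, Finset.sum_add_distrib]

theorem avg2_mul (k : ℝ) (F : G1 → G2 → ℝ) :
    avg2 μ1 μ2 (fun a b => k * F a b) = k * avg2 μ1 μ2 F := by
  simp only [avg2, Finset.mul_sum]
  exact Finset.sum_congr rfl fun _ _ => Finset.sum_congr rfl fun _ _ => by ring

theorem avg2_sum {ι : Type*} (s : Finset ι) (F : ι → G1 → G2 → ℝ) :
    avg2 μ1 μ2 (fun a b => ∑ i ∈ s, F i a b) = ∑ i ∈ s, avg2 μ1 μ2 (F i) := by
  simp only [avg2, Finset.mul_sum]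
  rw [Finset.sum_comm]
  have : ∀ g2, ∑ g1, ∑ i ∈ s, μ1 g1 * (μ2 g2 * F i g1 g2) = ∑ i ∈ s, ∑ g1, μ1 g1 * (μ2 g2 * F i g1 g2) :=
    fun _ => Finset.sum_comm
  simp only [this]
  rw [Finset.sum_comm]
  exact Finset.sum_congr rfl fun _ _ => Finset.sum_comm

theorem avg2_const (h1 : ∑ g, μ1 g = 1) (h2 : ∑ g, μ2 g = 1) (k : ℝ) :
    avg2 μ1 μ2 (fun _ _ => k) = k := by
  simp only [avg2, ← Finset.mul_sum, ← Finset.sum_mul, h1, h2, one_mul]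

theorem avg2_mono (h1 : ∀ g, 0 ≤ μ1 g) (h2 : ∀ g, 0 ≤ μ2 g) {F H : G1 → G2 → ℝ}
    (h : ∀ a b, F a b ≤ H a b) : avg2 μ1 μ2 F ≤ avg2 μ1 μ2 H :=
  Finset.sum_le_sum fun _ _ => Finset.sum_le_sum fun _ _ =>
    mul_le_mul_of_nonneg_left (mul_le_mul_of_nonneg_left (h _ _) (h2 _)) (h1 _)

end avg

/-- `receiver_decoder` averaged over random superposition codes: only the miss probabilities and the
confusion probabilities of the tests remain. -/
theorem receiver_average {A B C E : Type*} [Fintype A] [DecidableEq A]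
    [Fintype B] [DecidableEq B] [Fintype C] [DecidableEq C]
    (p : U × X → ℝ) (r : V × Y → ℝ)
    {G1 G2 : Type*} [Fintype G1] [Fintype G2] (μ1 : G1 → ℝ) (μ2 : G2 → ℝ)
    (u : G1 → A → U) (x : G1 → A → B → X) (v : G2 → C → V) (y : G2 → C → E → Y)
    (h1 : IsSuperCode p μ1 u x) (h2 : IsSuperCode r μ2 v y)
    (P : Bool × Bool → U → X → V → Matrix D D ℂ)
    (hP0 : ∀ S a b c, 0 ≤ P S a b c) (hP1 : ∀ S a b c, P S a b c ≤ 1)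
    (ω : X → Y → Matrix D D ℂ) (hω0 : ∀ a b, 0 ≤ ω a b) (hω1 : ∀ a b, (ω a b).trace = 1)
    (δ : ℝ) (hδ0 : 0 < δ) (hδ1 : δ ≤ 1) (K : ℝ) (hK : 0 < K) :
    ∃ L : G1 → G2 → A × B → Matrix D D ℂ, (∀ g1 g2 m, 0 ≤ L g1 g2 m) ∧
      (∀ g1 g2, ∑ m, L g1 g2 m ≤ 1) ∧ ∀ a b c d,
      avg2 μ1 μ2 (fun g1 g2 => hsPair (1 - L g1 g2 (a, b)) (ω (x g1 a b) (y g2 c d)))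
        ≤ (6 * δ ^ 2 + 48 / K) + (2048 / δ ^ 2) * ∑ S, missErr p r (P S) ω
        + (64 * K) * ∑ m ∈ Finset.univ.erase (a, b), ∑ c',
            confErr p r (decide (a = m.1), decide (c = c'))
              (P (decide (a = m.1), decide (c = c'))) ω := by
  choose L hL0 hL1 hL using fun g1 g2 => receiver_decoder
    (fun S a b c => P S (u g1 a) (x g1 a b) (v g2 c)) (fun S a b c => hP0 _ _ _ _)
    (fun S a b c => hP1 _ _ _ _) δ hδ0 hδ1 K hK
  refine ⟨L, hL0, hL1, fun a b c d => ?_⟩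
  have e1 : ∀ S, avg2 μ1 μ2 (fun g1 g2 =>
      hsPair (1 - P S (u g1 a) (x g1 a b) (v g2 c)) (ω (x g1 a b) (y g2 c d))) =
      missErr p r (P S) ω := by
    intro S
    simp only [avg2, ← Finset.mul_sum]
    have : ∀ g1, ∑ g2, μ2 g2 * hsPair (1 - P S (u g1 a) (x g1 a b) (v g2 c)) (ω (x g1 a b) (y g2 c d))
        = ∑ t, r t * hsPair (1 - P S (u g1 a) (x g1 a b) t.1) (ω (x g1 a b) t.2) := fun g1 =>
      h2.single c d fun t => hsPair (1 - P S (u g1 a) (x g1 a b) t.1) (ω (x g1 a b) t.2)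
    simp only [this]
    exact h1.single a b fun s => ∑ t, r t * hsPair (1 - P S s.1 s.2 t.1) (ω s.2 t.2)
  have e2 : ∀ (m : A × B) (c' : C) S, (a, b) ≠ m → S = (decide (a = m.1), decide (c = c')) →
      avg2 μ1 μ2 (fun g1 g2 =>
        hsPair (P S (u g1 m.1) (x g1 m.1 m.2) (v g2 c')) (ω (x g1 a b) (y g2 c d))) =
      confErr p r S (P S) ω := by
    intro m c' S hm hS
    simp only [avg2, ← Finset.mul_sum]
    have : ∀ g1, ∑ g2, μ2 g2 * hsPair (P S (u g1 m.1) (x g1 m.1 m.2) (v g2 c')) (ω (x g1 a b) (y g2 c d))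
        = ∑ s', ∑ t', coarseLaw r S.2 s' t' *
          hsPair (P S (u g1 m.1) (x g1 m.1 m.2) t') (ω (x g1 a b) s'.2) := fun g1 => by
      rw [h2.coarse c d c' fun s' t' => hsPair (P S (u g1 m.1) (x g1 m.1 m.2) t') (ω (x g1 a b) s'.2), hS]
    simp only [this]
    rw [h1.pair a b m.1 m.2 hm fun s t => ∑ s', ∑ t', coarseLaw r S.2 s' t' *
          hsPair (P S t.1 t.2 t') (ω s.2 s'.2), confErr, hS]
  have e3 : ∀ m ∈ Finset.univ.erase (a, b), ∀ c' : C, avg2 μ1 μ2 (fun g1 g2 =>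
        hsPair (P (decide (a = m.1), decide (c = c')) (u g1 m.1) (x g1 m.1 m.2) (v g2 c')) (ω (x g1 a b) (y g2 c d))) =
      confErr p r (decide (a = m.1), decide (c = c')) (P (decide (a = m.1), decide (c = c'))) ω :=
    fun m hm c' => e2 m c' _ (Finset.ne_of_mem_erase hm).symm rfl
  refine (avg2_mono μ1 μ2 h1.nonneg h2.nonneg (H := fun g1 g2 => (6 * δ ^ 2 + 48 / K) + (2048 / δ ^ 2) * ∑ S,
      hsPair (1 - P S (u g1 a) (x g1 a b) (v g2 c)) (ω (x g1 a b) (y g2 c d))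
      + (64 * K) * ∑ m ∈ Finset.univ.erase (a, b), ∑ c',
        hsPair (P (decide (a = m.1), decide (c = c')) (u g1 m.1) (x g1 m.1 m.2) (v g2 c')) (ω (x g1 a b) (y g2 c d)))
      fun g1 g2 => ?_).trans (le_of_eq ?_)
  · have h := hsPair_mono (hL g1 g2 a b c) (hω0 (x g1 a b) (y g2 c d))
    rw [hsPair_add, hsPair_add, hsPair_smul, hsPair_smul, hsPair_smul, hsPair_sum, hsPair_sum] at h
    simp only [hsPair_sum] at h
    have e0 : hsPair 1 (ω (x g1 a b) (y g2 c d)) = 1 := by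
      rw [hsPair, Matrix.one_mul, hω1]; simp
    rwa [e0, mul_one] at h
  · rw [avg2_add, avg2_add, avg2_const _ _ h1.total h2.total, avg2_mul, avg2_mul, avg2_sum, avg2_sum]
    simp only [avg2_sum, e1]
    rw [Finset.sum_congr rfl fun m hm => Finset.sum_congr rfl fun c' _ => e3 m hm c']

end Recv

/-! ### From hypothesis tests on classical-quantum states to families of tests -/

section Tests
open Matrix
variable {D : Type*} [Fintype D] [DecidableEq D] {U X V Y Qt : Type*} [Fintype U] [DecidableEq U]
  [Fintype X] [DecidableEq X] [Fintype V] [DecidableEq V] [Fintype Y] [Fintype Qt] [DecidableEq Qt]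

/-- An exponent strictly below `DH` is attained by a test. -/
theorem dh_test {ι : Type*} [Fintype ι] [DecidableEq ι] {ε v : ℝ} {α β : Matrix ι ι ℂ}
    (h : (v : EReal) < DH ε α β) : ∃ E : Matrix ι ι ℂ, 0 ≤ E ∧ E ≤ 1 ∧ 1 - ε ≤ hsPair E α ∧
      hsPair E β ≤ 2 ^ (-v) := by
  obtain ⟨_, ⟨d, ⟨E, hE, h1, h2⟩, rfl⟩, hd⟩ := lt_sSup_iff.1 h
  refine ⟨E, nonneg_iff_posSemidef.2 hE.1, Matrix.le_iff.2 hE.2, h1, h2.trans ?_⟩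
  have := EReal.coe_lt_coe_iff.1 hd
  exact Real.rpow_le_rpow_of_exponent_le one_le_two (by linarith)

/-- The diagonal block of `E` at the classical value `c`. -/
def diagBlock {I : Type*} (E : Matrix (I × D) (I × D) ℂ) (c : I) : Matrix D D ℂ :=
  E.submatrix (fun d => (c, d)) (fun d => (c, d))

theorem diagBlock_nonneg {I : Type*} [Fintype I] [DecidableEq I] {E : Matrix (I × D) (I × D) ℂ}
    (h : 0 ≤ E) (c : I) : 0 ≤ diagBlock E c :=
  nonneg_iff_posSemidef.2 ((nonneg_iff_posSemidef.1 h).submatrix _)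

theorem diagBlock_le_one {I : Type*} [Fintype I] [DecidableEq I] {E : Matrix (I × D) (I × D) ℂ}
    (h : E ≤ 1) (c : I) : diagBlock E c ≤ 1 := by
  rw [Matrix.le_iff] at h ⊢
  convert h.submatrix (fun d => (c, d)) using 1
  ext i j
  simp [diagBlock, Matrix.one_apply]

theorem hsPair_cqState {I : Type*} [Fintype I] [DecidableEq I] (E : Matrix (I × D) (I × D) ℂ)
    (σ : I → Matrix D D ℂ) : hsPair E (cqState σ) = ∑ c, hsPair (diagBlock E c) (σ c) := by
  simp only [hsPair, ← Complex.re_sum]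
  congr 1
  simp only [Matrix.trace, Matrix.diag, Matrix.mul_apply, Fintype.sum_prod_type, cqState, of_apply,
    diagBlock, submatrix_apply]
  refine Finset.sum_congr rfl fun c _ => Finset.sum_congr rfl fun d _ => ?_
  rw [Finset.sum_eq_single c]
  · simp
  · intro b _ hb; simp [hb]
  · simp

/-- The output for own input `x`, averaged over the other sender's input and weighted by the probability of
its cloud centre `v`. -/
def avgOut (r : V × Y → ℝ) (ω : X → Y → Matrix D D ℂ) (x : X) (v : V) : Matrix D D ℂ :=
  ∑ y, (r (v, y) : ℂ) • ω x y

theorem sum_hsPair_avgOut (r : V × Y → ℝ) (ω : X → Y → Matrix D D ℂ) (x : X) (M : V → Matrix D D ℂ) :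
    ∑ t, r t * hsPair (M t.1) (ω x t.2) = ∑ v, hsPair (M v) (avgOut r ω x v) := by
  simp only [Fintype.sum_prod_type, avgOut, hsPair_sum_right, hsPair_smul_right]

theorem missErr_eq (p : U × X → ℝ) (r : V × Y → ℝ) (hp : ∑ s, p s = 1) (hr : ∑ s, r s = 1)
    (P : U → X → V → Matrix D D ℂ) (ω : X → Y → Matrix D D ℂ) (hω1 : ∀ a b, (ω a b).trace = 1) :
    missErr p r P ω = 1 - ∑ u, ∑ x, ∑ v, p (u, x) * hsPair (P u x v) (avgOut r ω x v) := by
  have h1 : ∀ x y, hsPair 1 (ω x y) = 1 := by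
    intro x y; rw [hsPair, Matrix.one_mul, hω1]; simp
  simp only [missErr, hsPair_sub, h1, mul_sub, Finset.sum_sub_distrib, mul_one, hr, hp]
  congr 1
  rw [Fintype.sum_prod_type]
  refine Finset.sum_congr rfl fun u _ => Finset.sum_congr rfl fun x _ => ?_
  rw [sum_hsPair_avgOut r ω x (fun v => P u x v), Finset.mul_sum]

/-- Averaging over the other sender's codeword, with the tested cloud centre either the true one or an
independent one. -/
theorem coarse_inner (r : V × Y → ℝ) (same : Bool) (ω : X → Y → Matrix D D ℂ) (x : X) (M : V → Matrix D D ℂ) :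
    ∑ s', ∑ t', coarseLaw r same s' t' * hsPair (M t') (ω x s'.2) =
      if same then ∑ v, hsPair (M v) (avgOut r ω x v) else
        ∑ v, ∑ v', (∑ y, r (v, y)) * hsPair (M v) (avgOut r ω x v') := by
  cases same
  · simp only [coarseLaw, Bool.false_eq_true, if_false]
    rw [Finset.sum_comm]
    refine Finset.sum_congr rfl fun v _ => ?_
    rw [← Finset.mul_sum, ← sum_hsPair_avgOut r ω x (fun _ => M v), Finset.mul_sum]
    exact Finset.sum_congr rfl fun t _ => by ring
  · rw [if_pos rfl, ← sum_hsPair_avgOut]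
    refine Finset.sum_congr rfl fun v _ => ?_
    simp [coarseLaw]

/-- Averaging over the own sender's true and tested codewords; `x'` is the tested one and `x` the true
one. -/
theorem pair_outer (p : U × X → ℝ) (same : Bool) (F : X → U → X → ℝ) :
    ∑ s, ∑ t, pairLaw p same s t * F s.2 t.1 t.2 =
     if same then ∑ u, ∑ x', ∑ x, p (u, x') / (∑ x, p (u, x)) * (p (u, x) * F x u x')
     else ∑ u, ∑ x', ∑ x, p (u, x') * ((∑ u, p (u, x)) * F x u x') := by
  cases same
  · simp only [pairLaw, Bool.false_eq_true, if_false]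
    rw [Finset.sum_comm]
    simp only [Fintype.sum_prod_type]
    refine Finset.sum_congr rfl fun u _ => Finset.sum_congr rfl fun x _ => ?_
    rw [Finset.sum_comm]
    refine Finset.sum_congr rfl fun x' _ => ?_
    rw [Finset.sum_mul, Finset.mul_sum]
    exact Finset.sum_congr rfl fun t _ => by ring
  · simp only [pairLaw, if_true]
    simp only [Fintype.sum_prod_type]
    refine Finset.sum_congr rfl fun u _ => ?_
    rw [Finset.sum_comm' (t' := Finset.univ) (s' := fun _ => Finset.univ) (by simp)]
    rw [Finset.sum_eq_single u]
    · rw [Finset.sum_comm]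
      refine Finset.sum_congr rfl fun x _ => Finset.sum_congr rfl fun x' _ => ?_
      simp; ring
    · intro b _ hb
      refine Finset.sum_eq_zero fun x _ => Finset.sum_eq_zero fun x' _ => ?_
      simp [hb.symm]
    · simp

/-- The confusion probability in the four classes, in terms of the averaged outputs. -/
theorem confErr_eq (p : U × X → ℝ) (r : V × Y → ℝ) (S : Bool × Bool)
    (P : U → X → V → Matrix D D ℂ) (ω : X → Y → Matrix D D ℂ) :
    confErr p r S P ω =
      if S.1 then
        if S.2 then ∑ u, ∑ x', ∑ x, p (u, x') / (∑ x, p (u, x)) * (p (u, x) *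
          ∑ v, hsPair (P u x' v) (avgOut r ω x v))
        else ∑ u, ∑ x', ∑ x, p (u, x') / (∑ x, p (u, x)) * (p (u, x) *
          ∑ v, ∑ v', (∑ y, r (v, y)) * hsPair (P u x' v) (avgOut r ω x v'))
      else
        if S.2 then ∑ u, ∑ x', ∑ x, p (u, x') * ((∑ u, p (u, x)) *
          ∑ v, hsPair (P u x' v) (avgOut r ω x v))
        else ∑ u, ∑ x', ∑ x, p (u, x') * ((∑ u, p (u, x)) *
          ∑ v, ∑ v', (∑ y, r (v, y)) * hsPair (P u x' v) (avgOut r ω x v')) := by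
  rw [confErr]
  have := pair_outer p S.1 (fun x u x' => ∑ s', ∑ t', coarseLaw r S.2 s' t' *
    hsPair (P u x' t') (ω x s'.2))
  rw [this]
  simp only [coarse_inner r S.2 ω _ (fun v => P _ _ v)]
  split_ifs <;> rfl

end Tests

/-! ### Tests achieving the four conditional mutual informations -/

section Tests2
open Matrix
variable {D : Type*} [Fintype D] [DecidableEq D] {U X V Y Qt : Type*} [Fintype U] [DecidableEq U]
  [Fintype X] [DecidableEq X] [Fintype V] [DecidableEq V] [Fintype Y] [Fintype Qt] [DecidableEq Qt]

/-- A family of tests, one for each candidate `(q, u, x, v)`, with miss probability at most `ε` and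
confusion probability in the error class `S` at most `2 ^ (-v)`, both averaged over `q`. -/
def HasTest (ε : ℝ) (pQ : Qt → ℝ) (p : Qt → U × X → ℝ) (r : Qt → V × Y → ℝ)
    (ω : X → Y → Matrix D D ℂ) (S : Bool × Bool) (v : ℝ) : Prop :=
  ∃ P : Qt → U → X → V → Matrix D D ℂ, (∀ q a b c, 0 ≤ P q a b c) ∧ (∀ q a b c, P q a b c ≤ 1) ∧
    ∑ q, pQ q * missErr (p q) (r q) (P q) ω ≤ ε ∧
    ∑ q, pQ q * confErr (p q) (r q) S (P q) ω ≤ 2 ^ (-v)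

section cases
variable {ε v : ℝ} {pQ : Qt → ℝ} {p : Qt → U × X → ℝ} {r : Qt → V × Y → ℝ}
    {ω : X → Y → Matrix D D ℂ}

/-- Accepting the true cq-state with probability `1 - ε` bounds the miss probability. -/
theorem miss_of_accept (hpQ : ∑ q, pQ q = 1) (hp : ∀ q, ∑ s, p q s = 1)
    (hr : ∀ q, ∑ s, r q s = 1) (hω : ∀ a b, (ω a b).trace = 1) {P : Qt → U → X → V → Matrix D D ℂ}
    (h : 1 - ε ≤ ∑ q, pQ q * ∑ u, ∑ x, ∑ v, p q (u, x) * hsPair (P q u x v) (avgOut (r q) ω x v)) :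
    ∑ q, pQ q * missErr (p q) (r q) (P q) ω ≤ ε := by
  simp only [missErr_eq _ _ (hp _) (hr _) _ ω hω, mul_sub, mul_one, Finset.sum_sub_distrib, hpQ]
  linarith

/-- Tests from `I(X : Y | V Q)`: own common index wrong, other common index right. -/
theorem hasTest_ft (hpQ : ∑ q, pQ q = 1) (hp : ∀ q, ∑ s, p q s = 1)
    (hr : ∀ q, ∑ s, r q s = 1) (hω : ∀ a b, (ω a b).trace = 1)
    (h : (v : EReal) < DH ε
      (cqState fun c : (Qt × V) × X =>
        ((pQ c.1.1 * ∑ u, p c.1.1 (u, c.2) : ℝ) : ℂ) • avgOut (r c.1.1) ω c.2 c.1.2)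
      (cqState fun c : (Qt × V) × X =>
        ((pQ c.1.1 * ∑ u, p c.1.1 (u, c.2) : ℝ) : ℂ) •
          ∑ x, ((∑ u, p c.1.1 (u, x) : ℝ) : ℂ) • avgOut (r c.1.1) ω x c.1.2)) :
    HasTest ε pQ p r ω (false, true) v := by
  obtain ⟨E, h0, h1, ha, hb⟩ := dh_test h
  refine ⟨fun q u x v => diagBlock E ((q, v), x), fun _ _ _ _ => diagBlock_nonneg h0 _,
    fun _ _ _ _ => diagBlock_le_one h1 _, miss_of_accept hpQ hp hr hω (ha.trans (le_of_eq ?_)),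
    (le_of_eq ?_).trans hb⟩
  · rw [hsPair_cqState]
    simp only [Fintype.sum_prod_type, hsPair_smul_right]
    refine Finset.sum_congr rfl fun q _ => ?_
    simp only [Finset.mul_sum, Finset.sum_mul]
    rw [Finset.sum_comm]
    rw [Finset.sum_comm (s := (Finset.univ : Finset U))]
    refine Finset.sum_congr rfl fun x _ => ?_
    rw [Finset.sum_comm]
    exact Finset.sum_congr rfl fun x _ => Finset.sum_congr rfl fun x _ => by ring
  · rw [hsPair_cqState]
    simp only [Fintype.sum_prod_type, hsPair_smul_right, hsPair_sum_right]
    refine Finset.sum_congr rfl fun q _ => ?_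
    rw [confErr_eq]
    simp only [if_false, if_true, Bool.false_eq_true]
    rw [Finset.sum_comm (s := (Finset.univ : Finset V))]
    rw [Finset.sum_comm (s := (Finset.univ : Finset U)), Finset.mul_sum]
    refine Finset.sum_congr rfl fun x' _ => ?_
    simp only [← Finset.sum_mul, ← Finset.mul_sum, mul_assoc]
    congr 2
    rw [Finset.sum_comm]
    exact Finset.sum_congr rfl fun x _ => by rw [Finset.mul_sum]

/-- Tests from `I(X V : Y | U Q)`: own common index right, other common index wrong. -/
theorem hasTest_tf (hpQ : ∑ q, pQ q = 1) (hp : ∀ q, ∑ s, p q s = 1)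
    (hr : ∀ q, ∑ s, r q s = 1) (hω : ∀ a b, (ω a b).trace = 1)
    (h : (v : EReal) < DH ε
      (cqState fun c : (Qt × U) × (X × V) =>
        ((pQ c.1.1 * p c.1.1 (c.1.2, c.2.1) : ℝ) : ℂ) • avgOut (r c.1.1) ω c.2.1 c.2.2)
      (cqState fun c : (Qt × U) × (X × V) =>
        ((pQ c.1.1 * p c.1.1 (c.1.2, c.2.1) * (∑ y, r c.1.1 (c.2.2, y)) /
          ∑ x, p c.1.1 (c.1.2, x) : ℝ) : ℂ) •
        ∑ x, ∑ v2, (p c.1.1 (c.1.2, x) : ℂ) • avgOut (r c.1.1) ω x v2)) :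
    HasTest ε pQ p r ω (true, false) v := by
  obtain ⟨E, h0, h1, ha, hb⟩ := dh_test h
  refine ⟨fun q u x v => diagBlock E ((q, u), (x, v)), fun _ _ _ _ => diagBlock_nonneg h0 _,
    fun _ _ _ _ => diagBlock_le_one h1 _, miss_of_accept hpQ hp hr hω (ha.trans (le_of_eq ?_)),
    (le_of_eq ?_).trans hb⟩
  · rw [hsPair_cqState]
    simp only [Fintype.sum_prod_type, hsPair_smul_right]
    simp only [Finset.mul_sum, mul_assoc]
  · rw [hsPair_cqState]
    simp only [Fintype.sum_prod_type, hsPair_smul_right, hsPair_sum_right]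
    refine Finset.sum_congr rfl fun q _ => ?_
    rw [confErr_eq]
    obtain ⟨R, hR⟩ : ∃ R : V → ℝ, ∀ v, ∑ y, r q (v, y) = R v := ⟨_, fun _ => rfl⟩
    simp only [if_false, if_true, Bool.false_eq_true, hR]
    rw [Finset.mul_sum]
    refine Finset.sum_congr rfl fun u _ => ?_
    rw [Finset.mul_sum]
    refine Finset.sum_congr rfl fun x' _ => ?_
    simp only [Finset.mul_sum]
    rw [Finset.sum_comm]
    refine Finset.sum_congr rfl fun v _ => Finset.sum_congr rfl fun x _ =>
      Finset.sum_congr rfl fun v' _ => ?_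
    ring

/-- Tests from `I(X V : Y | Q)`: both common indices wrong. -/
theorem hasTest_ff (hpQ : ∑ q, pQ q = 1) (hp : ∀ q, ∑ s, p q s = 1)
    (hr : ∀ q, ∑ s, r q s = 1) (hω : ∀ a b, (ω a b).trace = 1)
    (h : (v : EReal) < DH ε
      (cqState fun c : Qt × (X × V) =>
        ((pQ c.1 * ∑ u, p c.1 (u, c.2.1) : ℝ) : ℂ) • avgOut (r c.1) ω c.2.1 c.2.2)
      (cqState fun c : Qt × (X × V) =>
        ((pQ c.1 * (∑ u, p c.1 (u, c.2.1)) * (∑ y, r c.1 (c.2.2, y)) : ℝ) : ℂ) •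
        ∑ x, ∑ v2, ((∑ u, p c.1 (u, x) : ℝ) : ℂ) • avgOut (r c.1) ω x v2)) :
    HasTest ε pQ p r ω (false, false) v := by
  obtain ⟨E, h0, h1, ha, hb⟩ := dh_test h
  refine ⟨fun q u x v => diagBlock E (q, (x, v)), fun _ _ _ _ => diagBlock_nonneg h0 _,
    fun _ _ _ _ => diagBlock_le_one h1 _, miss_of_accept hpQ hp hr hω (ha.trans (le_of_eq ?_)),
    (le_of_eq ?_).trans hb⟩
  · rw [hsPair_cqState]
    simp only [Fintype.sum_prod_type, hsPair_smul_right]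
    refine Finset.sum_congr rfl fun q _ => ?_
    rw [Finset.sum_comm (s := (Finset.univ : Finset U)), Finset.mul_sum]
    refine Finset.sum_congr rfl fun x _ => ?_
    rw [Finset.sum_comm (s := (Finset.univ : Finset U))]
    simp only [← Finset.sum_mul, mul_assoc, ← Finset.mul_sum]
  · rw [hsPair_cqState]
    simp only [Fintype.sum_prod_type, hsPair_smul_right, hsPair_sum_right]
    refine Finset.sum_congr rfl fun q _ => ?_
    rw [confErr_eq]
    obtain ⟨R, hR⟩ : ∃ R : V → ℝ, ∀ v, ∑ y, r q (v, y) = R v := ⟨_, fun _ => rfl⟩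
    obtain ⟨T, hT⟩ : ∃ T : X → ℝ, ∀ x, ∑ u, p q (u, x) = T x := ⟨_, fun _ => rfl⟩
    simp only [if_false, Bool.false_eq_true, hR, hT]
    rw [Finset.sum_comm (s := (Finset.univ : Finset U)), Finset.mul_sum]
    refine Finset.sum_congr rfl fun x' _ => ?_
    rw [Finset.sum_comm]
    simp only [← Finset.sum_mul, hT]
    simp only [Finset.mul_sum]
    rw [Finset.sum_comm]
    refine Finset.sum_congr rfl fun v _ => Finset.sum_congr rfl fun x _ =>
      Finset.sum_congr rfl fun v' _ => ?_
    ring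

/-- Tests from `I(X : Y | U V Q)`: both common indices right, private index wrong. -/
theorem hasTest_tt (hpQ : ∑ q, pQ q = 1) (hp : ∀ q, ∑ s, p q s = 1)
    (hr : ∀ q, ∑ s, r q s = 1) (hω : ∀ a b, (ω a b).trace = 1)
    (h : (v : EReal) < DH ε
      (cqState fun c : (Qt × U × V) × X =>
        ((pQ c.1.1 * p c.1.1 (c.1.2.1, c.2) : ℝ) : ℂ) • avgOut (r c.1.1) ω c.2 c.1.2.2)
      (cqState fun c : (Qt × U × V) × X =>
        ((pQ c.1.1 * p c.1.1 (c.1.2.1, c.2) / ∑ x, p c.1.1 (c.1.2.1, x) : ℝ) : ℂ) •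
        ∑ x, (p c.1.1 (c.1.2.1, x) : ℂ) • avgOut (r c.1.1) ω x c.1.2.2)) :
    HasTest ε pQ p r ω (true, true) v := by
  obtain ⟨E, h0, h1, ha, hb⟩ := dh_test h
  refine ⟨fun q u x v => diagBlock E ((q, (u, v)), x), fun _ _ _ _ => diagBlock_nonneg h0 _,
    fun _ _ _ _ => diagBlock_le_one h1 _, miss_of_accept hpQ hp hr hω (ha.trans (le_of_eq ?_)),
    (le_of_eq ?_).trans hb⟩
  · rw [hsPair_cqState]
    simp only [Fintype.sum_prod_type, hsPair_smul_right]
    refine Finset.sum_congr rfl fun q _ => ?_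
    rw [Finset.mul_sum]
    refine Finset.sum_congr rfl fun u _ => ?_
    rw [Finset.sum_comm]
    simp only [Finset.mul_sum, mul_assoc]
  · rw [hsPair_cqState]
    simp only [Fintype.sum_prod_type, hsPair_smul_right, hsPair_sum_right]
    refine Finset.sum_congr rfl fun q _ => ?_
    rw [confErr_eq]
    simp only [if_true]
    rw [Finset.mul_sum]
    refine Finset.sum_congr rfl fun u _ => ?_
    rw [Finset.sum_comm (s := (Finset.univ : Finset V)), Finset.mul_sum]
    refine Finset.sum_congr rfl fun x' _ => ?_
    simp only [Finset.mul_sum]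
    rw [Finset.sum_comm]
    refine Finset.sum_congr rfl fun v _ => Finset.sum_congr rfl fun x _ => ?_
    ring

/-- `hasTest_tt` with the conditioning systems `U` and `V` in the opposite order. -/
theorem hasTest_tt' (hpQ : ∑ q, pQ q = 1) (hp : ∀ q, ∑ s, p q s = 1)
    (hr : ∀ q, ∑ s, r q s = 1) (hω : ∀ a b, (ω a b).trace = 1)
    (h : (v : EReal) < DH ε
      (cqState fun c : (Qt × V × U) × X =>
        ((pQ c.1.1 * p c.1.1 (c.1.2.2, c.2) : ℝ) : ℂ) • avgOut (r c.1.1) ω c.2 c.1.2.1)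
      (cqState fun c : (Qt × V × U) × X =>
        ((pQ c.1.1 * p c.1.1 (c.1.2.2, c.2) / ∑ x, p c.1.1 (c.1.2.2, x) : ℝ) : ℂ) •
        ∑ x, (p c.1.1 (c.1.2.2, x) : ℂ) • avgOut (r c.1.1) ω x c.1.2.1)) :
    HasTest ε pQ p r ω (true, true) v := by
  obtain ⟨E, h0, h1, ha, hb⟩ := dh_test h
  refine ⟨fun q u x v => diagBlock E ((q, (v, u)), x), fun _ _ _ _ => diagBlock_nonneg h0 _,
    fun _ _ _ _ => diagBlock_le_one h1 _, miss_of_accept hpQ hp hr hω (ha.trans (le_of_eq ?_)),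
    (le_of_eq ?_).trans hb⟩
  · rw [hsPair_cqState]
    simp only [Fintype.sum_prod_type, hsPair_smul_right]
    refine Finset.sum_congr rfl fun q _ => ?_
    rw [Finset.mul_sum, Finset.sum_comm]
    refine Finset.sum_congr rfl fun u _ => ?_
    rw [Finset.sum_comm]
    simp only [Finset.mul_sum, mul_assoc]
  · rw [hsPair_cqState]
    simp only [Fintype.sum_prod_type, hsPair_smul_right, hsPair_sum_right]
    refine Finset.sum_congr rfl fun q _ => ?_
    rw [confErr_eq]
    simp only [if_true]
    rw [Finset.mul_sum, Finset.sum_comm (s := (Finset.univ : Finset V))]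
    refine Finset.sum_congr rfl fun u _ => ?_
    rw [Finset.sum_comm (s := (Finset.univ : Finset V)), Finset.mul_sum]
    refine Finset.sum_congr rfl fun x' _ => ?_
    simp only [Finset.mul_sum]
    rw [Finset.sum_comm]
    refine Finset.sum_congr rfl fun v _ => Finset.sum_congr rfl fun x _ => ?_
    ring

end cases
end Tests2

/-! ### The total error at one receiver -/

section Recv2
open Matrix
variable {D : Type*} [Fintype D] [DecidableEq D] {U X V Y Qt : Type*} [Fintype U] [DecidableEq U]
  [Fintype X] [DecidableEq X] [Fintype V] [DecidableEq V] [Fintype Y] [Fintype Qt] [DecidableEq Qt]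

theorem sum_decide {C : Type*} [Fintype C] [DecidableEq C] (c : C) (f : Bool → ℝ) :
    ∑ c', f (decide (c = c')) = f true + (Fintype.card C - 1) * f false := by
  rw [← Finset.add_sum_erase _ _ (Finset.mem_univ c)]
  have : ∀ c' ∈ Finset.univ.erase c, f (decide (c = c')) = f false := by
    intro c' hc
    rw [decide_eq_false (Finset.ne_of_mem_erase hc).symm]
  rw [Finset.sum_congr rfl this, Finset.sum_const, Finset.card_erase_of_mem (Finset.mem_univ c),
    Finset.card_univ, nsmul_eq_mul, Nat.cast_sub (Fintype.card_pos_iff.2 ⟨c⟩)]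
  simp

/-- The number of wrong candidates in each of the four error classes. Candidates with the right `(a, b)`
are no errors, whatever `c` is. -/
theorem sum_confusions {A B C : Type*} [Fintype A] [DecidableEq A]
    [Fintype B] [DecidableEq B] [Fintype C] [DecidableEq C] (a : A) (b : B) (c : C)
    (T : Bool × Bool → ℝ) :
    ∑ m ∈ Finset.univ.erase (a, b), ∑ c', T (decide (a = m.1), decide (c = c')) =
      (Fintype.card B - 1) * T (true, true)
      + (Fintype.card B - 1) * (Fintype.card C - 1) * T (true, false)
      + (Fintype.card A - 1) * Fintype.card B * T (false, true)
      + (Fintype.card A - 1) * Fintype.card B * (Fintype.card C - 1) * T (false, false) := by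
  have h : ∀ z, ∑ c', T (z, decide (c = c')) =
      T (z, true) + (Fintype.card C - 1) * T (z, false) := fun z => sum_decide c fun w => T (z, w)
  simp only [h]
  have h2 := Finset.add_sum_erase Finset.univ (fun m : A × B => T (decide (a = m.1), true) +
    (Fintype.card C - 1) * T (decide (a = m.1), false)) (Finset.mem_univ (a, b))
  have h3 := sum_decide a (fun z => Fintype.card B * (T (z, true) +
    (Fintype.card C - 1) * T (z, false)))
  have h4 : ∀ f : A → ℝ, ∑ m : A × B, f m.1 = ∑ a', Fintype.card B * f a' := by
    intro f; rw [Fintype.sum_prod_type]; simp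
  rw [h4 fun a' => T (decide (a = a'), true) +
    (Fintype.card C - 1) * T (decide (a = a'), false), h3] at h2
  simp only [decide_true] at h2
  linear_combination h2

/-- The union bound over the wrong candidates: for each of the four classes, their number times
`2 ^ (-v S)`. The numbers of common indices, private indices and common indices of the other sender are
`nA`, `nB` and `nC`. -/
noncomputable def confTotal (nA nB nC : ℕ) (v : Bool × Bool → ℝ) : ℝ :=
  ((nB : ℝ) - 1) * 2 ^ (-v (true, true))
      + ((nB : ℝ) - 1) * ((nC : ℝ) - 1) * 2 ^ (-v (true, false))
      + ((nA : ℝ) - 1) * nB * 2 ^ (-v (false, true))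
      + ((nA : ℝ) - 1) * nB * ((nC : ℝ) - 1) * 2 ^ (-v (false, false))

/-- The expected decoding error of one receiver, for every message pair, in terms of the exponents `v S`
of the four families of tests. -/
theorem receiver_total {A B C E : Type*} [Fintype A] [DecidableEq A]
    [Fintype B] [DecidableEq B] [Fintype C] [DecidableEq C]
    {ε : ℝ} {pQ : Qt → ℝ} {p : Qt → U × X → ℝ} {r : Qt → V × Y → ℝ}
    {ω : X → Y → Matrix D D ℂ} (hpQ0 : ∀ q, 0 ≤ pQ q) (hpQ : ∑ q, pQ q = 1)
    (hω0 : ∀ a b, 0 ≤ ω a b) (hω1 : ∀ a b, (ω a b).trace = 1)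
    {G1 G2 : Type*} [Fintype G1] [Fintype G2] (μ1 : Qt → G1 → ℝ) (μ2 : Qt → G2 → ℝ)
    (u : G1 → A → U) (x : G1 → A → B → X) (w : G2 → C → V) (y : G2 → C → E → Y)
    (h1 : ∀ q, IsSuperCode (p q) (μ1 q) u x) (h2 : ∀ q, IsSuperCode (r q) (μ2 q) w y)
    (v : Bool × Bool → ℝ) (hT : ∀ S, HasTest ε pQ p r ω S (v S))
    (δ : ℝ) (hδ0 : 0 < δ) (hδ1 : δ ≤ 1) (K : ℝ) (hK : 0 < K) :
    ∃ L : Qt → G1 → G2 → A × B → Matrix D D ℂ, (∀ q g1 g2 m, 0 ≤ L q g1 g2 m) ∧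
      (∀ q g1 g2, ∑ m, L q g1 g2 m ≤ 1) ∧ ∀ a b c d,
      ∑ q, pQ q * avg2 (μ1 q) (μ2 q)
        (fun g1 g2 => hsPair (1 - L q g1 g2 (a, b)) (ω (x g1 a b) (y g2 c d)))
        ≤ (6 * δ ^ 2 + 48 / K) + (2048 / δ ^ 2) * (4 * ε)
        + (64 * K) * confTotal (Fintype.card A) (Fintype.card B) (Fintype.card C) v := by
  choose P hP0 hP1 hmiss hconf using hT
  choose L hL0 hL1 hL using fun q => receiver_average (p q) (r q) (μ1 q) (μ2 q) u x w y (h1 q)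
    (h2 q) (fun S => P S q) (fun S => hP0 S q) (fun S => hP1 S q) ω hω0 hω1 δ hδ0 hδ1 K hK
  refine ⟨L, hL0, hL1, fun a b c d => ?_⟩
  refine (Finset.sum_le_sum fun q _ => mul_le_mul_of_nonneg_left (hL q a b c d) (hpQ0 q)).trans ?_
  have sc := fun q => sum_confusions a b c (fun S => confErr (p q) (r q) S (P S q) ω)
  simp only [sc, mul_add,
    Finset.sum_add_distrib, ← Finset.sum_mul, hpQ, one_mul]
  have e1 : ∑ q, pQ q * (2048 / δ ^ 2 * ∑ S, missErr (p q) (r q) (P S q) ω) ≤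
      2048 / δ ^ 2 * (4 * ε) := by
    have : ∑ q, pQ q * (2048 / δ ^ 2 * ∑ S, missErr (p q) (r q) (P S q) ω) =
      2048 / δ ^ 2 * ∑ S, ∑ q, pQ q * missErr (p q) (r q) (P S q) ω := by
      rw [Finset.sum_comm, Finset.mul_sum]
      refine Finset.sum_congr rfl fun q _ => ?_
      rw [← Finset.mul_sum]; ring
    rw [this]
    refine mul_le_mul_of_nonneg_left ?_ (by positivity)
    refine (Finset.sum_le_sum fun S _ => hmiss S).trans ?_
    simp
  have cA : (1 : ℝ) ≤ Fintype.card A := by exact_mod_cast Fintype.card_pos_iff.2 ⟨a⟩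
  have cB : (1 : ℝ) ≤ Fintype.card B := by exact_mod_cast Fintype.card_pos_iff.2 ⟨b⟩
  have cC : (1 : ℝ) ≤ Fintype.card C := by exact_mod_cast Fintype.card_pos_iff.2 ⟨c⟩
  have e2 : ∀ (S : Bool × Bool) (k : ℝ), 0 ≤ k →
     ∑ q, pQ q * (64 * K * (k * confErr (p q) (r q) S (P S q) ω)) ≤ 64 * K * (k * 2 ^ (-v S)) := by
    intro S k hk
    have : ∑ q, pQ q * (64 * K * (k * confErr (p q) (r q) S (P S q) ω)) =
      64 * K * (k * ∑ q, pQ q * confErr (p q) (r q) S (P S q) ω) := by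
      simp only [Finset.mul_sum]
      exact Finset.sum_congr rfl fun q _ => by ring
    rw [this]
    exact mul_le_mul_of_nonneg_left (mul_le_mul_of_nonneg_left (hconf S) hk) (by positivity)
  have f1 := e2 (true, true) (Fintype.card B - 1) (by linarith)
  have f2 := e2 (true, false) ((Fintype.card B - 1) * (Fintype.card C - 1))
    (mul_nonneg (by linarith) (by linarith))
  have f3 := e2 (false, true) ((Fintype.card A - 1) * Fintype.card B)
    (mul_nonneg (by linarith) (by linarith))
  have f4 := e2 (false, false) ((Fintype.card A - 1) * Fintype.card B * (Fintype.card C - 1))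
    (mul_nonneg (mul_nonneg (by linarith) (by linarith)) (by linarith))
  simp only [confTotal, mul_add]
  linarith

end Recv2

/-! ### Rate splitting -/

section Rates

/-- Feasibility of a rate split for total rates `r1` and `r2`: the private rates are `x` and `y`, the common
rates `r1 - x` and `r2 - y`. The thresholds at receiver `i` for the classes (private wrong), (private and
other common wrong), (everything wrong) are `αi`, `γi`, `Δi`. A constraint is void when a message part
involved in its error class is trivial, that is, has rate zero. The remaining class bounds the total rate
`ri` alone and does not depend on the split. -/
structure RateSplit (r1 r2 α1 γ1 Δ1 α2 γ2 Δ2 x y : ℝ) : Prop where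
  x0 : 0 ≤ x
  x1 : x ≤ r1
  y0 : 0 ≤ y
  y1 : y ≤ r2
  tt1 : x = 0 ∨ x ≤ α1
  tf1 : x = 0 ∨ y = r2 ∨ x + (r2 - y) ≤ γ1
  ff1 : x = r1 ∨ y = r2 ∨ r1 + (r2 - y) ≤ Δ1
  tt2 : y = 0 ∨ y ≤ α2
  tf2 : y = 0 ∨ x = r1 ∨ y + (r1 - x) ≤ γ2
  ff2 : y = r2 ∨ x = r1 ∨ r2 + (r1 - x) ≤ Δ2

theorem RateSplit.swap {r1 r2 α1 γ1 Δ1 α2 γ2 Δ2 x y : ℝ}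
    (h : RateSplit r1 r2 α1 γ1 Δ1 α2 γ2 Δ2 x y) : RateSplit r2 r1 α2 γ2 Δ2 α1 γ1 Δ1 y x :=
  ⟨h.y0, h.y1, h.x0, h.x1, h.tt2, h.tf2, h.ff2, h.tt1, h.tf1, h.ff1⟩

/-- The degenerate cases of the Fourier–Motzkin elimination. When one of the thresholds is too small, or
negative, there is a feasible split in which some message part is trivial and the corresponding
constraints are void. -/
theorem rateSplit_edge {r1 r2 α1 γ1 Δ1 α2 γ2 Δ2 : ℝ} (hr1 : 0 ≤ r1) (hr2 : 0 ≤ r2)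
    (h4 : r2 ≤ α2 + γ1) (h5 : r1 + r2 ≤ Δ1 + α2) (h6 : r1 + r2 ≤ Δ2 + α1)
    (h7 : r1 + r2 ≤ γ1 + γ2) (h8 : 2 * r1 + r2 ≤ Δ1 + α1 + γ2) (h9 : r1 + 2 * r2 ≤ Δ2 + α2 + γ1)
    (hc : Δ1 < r1 ∨ (r1 ≤ Δ1 ∧ r2 ≤ Δ2 ∧ γ1 < r1 + r2 - Δ2) ∨ γ1 < 0 ∨
      (r1 ≤ Δ1 ∧ r2 ≤ Δ2 ∧ r1 + r2 - Δ2 ≤ γ1 ∧ r1 + r2 - Δ1 ≤ γ2 ∧ 0 ≤ γ1 ∧ 0 ≤ γ2 ∧ α1 < 0)) :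
    ∃ x y, RateSplit r1 r2 α1 γ1 Δ1 α2 γ2 Δ2 x y := by
  rcases hc with hc | ⟨ha, hb, hc⟩ | hc | ⟨ha, hb, hc, hd, he, hf, hg⟩
  · rcases le_or_gt r1 α1 with h | h
    · exact ⟨r1, r2, by constructor <;> grind⟩
    rcases le_or_gt 0 α1 with h' | h'
    · exact ⟨α1, r2, by constructor <;> grind⟩
    · exact ⟨0, r2, by constructor <;> grind⟩
  · rcases le_or_gt (r1 + r2) γ2 with h | h
    · exact ⟨0, r2, by constructor <;> grind⟩
    · exact ⟨r1 + r2 - γ2, r2, by constructor <;> grind⟩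
  · exact ⟨0, r2, by constructor <;> grind⟩
  · rcases le_total 0 (r1 + r2 - Δ1) with h | h
    · exact ⟨0, r1 + r2 - Δ1, by constructor <;> grind⟩
    · exact ⟨0, 0, by constructor <;> grind⟩

/-- Fourier–Motzkin elimination of the private rates. In the generic case `x` is the least value allowed
by its lower bounds, and then so is `y`; each comparison with an upper bound is one of the hypotheses. The
degenerate cases are those of `rateSplit_edge`, up to exchanging the senders. -/
theorem exists_rateSplit {r1 r2 α1 γ1 Δ1 α2 γ2 Δ2 : ℝ} (hr1 : 0 ≤ r1) (hr2 : 0 ≤ r2)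
    (h2 : r1 ≤ α1 + γ2) (h4 : r2 ≤ α2 + γ1) (h5 : r1 + r2 ≤ Δ1 + α2) (h6 : r1 + r2 ≤ Δ2 + α1)
    (h7 : r1 + r2 ≤ γ1 + γ2) (h8 : 2 * r1 + r2 ≤ Δ1 + α1 + γ2)
    (h9 : r1 + 2 * r2 ≤ Δ2 + α2 + γ1) :
    ∃ x y, RateSplit r1 r2 α1 γ1 Δ1 α2 γ2 Δ2 x y := by
  have key := fun hc => rateSplit_edge hr1 hr2 h4 h5 h6 h7 h8 h9 hc
  have key' : _ → ∃ x y, RateSplit r1 r2 α1 γ1 Δ1 α2 γ2 Δ2 x y := fun hc => by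
    obtain ⟨y, x, h⟩ := rateSplit_edge (α1 := α2) (γ1 := γ2) (Δ1 := Δ2) (α2 := α1) (γ2 := γ1)
      (Δ2 := Δ1) hr2 hr1 h2 (by linarith) (by linarith) (by linarith) (by linarith)
      (by linarith) hc
    exact ⟨x, y, h.swap⟩
  by_cases a1 : Δ1 < r1
  · exact key (Or.inl a1)
  by_cases a2 : Δ2 < r2
  · exact key' (Or.inl a2)
  push Not at a1 a2
  by_cases a3 : γ1 < r1 + r2 - Δ2
  · exact key (Or.inr (Or.inl ⟨a1, a2, a3⟩))
  by_cases a4 : γ2 < r2 + r1 - Δ1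
  · exact key' (Or.inr (Or.inl ⟨a2, a1, a4⟩))
  by_cases a5 : γ1 < 0
  · exact key (Or.inr (Or.inr (Or.inl a5)))
  by_cases a6 : γ2 < 0
  · exact key' (Or.inr (Or.inr (Or.inl a6)))
  push Not at a3 a4 a5 a6
  by_cases a7 : α1 < 0
  · exact key (Or.inr (Or.inr (Or.inr ⟨a1, a2, a3, by linarith, a5, a6, a7⟩)))
  by_cases a8 : α2 < 0
  · exact key' (Or.inr (Or.inr (Or.inr ⟨a2, a1, a4, by linarith, a6, a5, a8⟩)))
  push Not at a7 a8
  obtain ⟨x, x0, x1, x2, x3, hx⟩ : ∃ x, 0 ≤ x ∧ r1 + r2 - Δ2 ≤ x ∧ r1 - γ2 ≤ x ∧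
      2 * r1 + r2 - Δ1 - γ2 ≤ x ∧ ∀ z, 0 ≤ z → r1 + r2 - Δ2 ≤ z → r1 - γ2 ≤ z →
      2 * r1 + r2 - Δ1 - γ2 ≤ z → x ≤ z :=
    ⟨max (max 0 (r1 + r2 - Δ2)) (max (r1 - γ2) (2 * r1 + r2 - Δ1 - γ2)), by simp, by simp, by simp,
      by simp, fun z h1 h2 h3 h4 => max_le (max_le h1 h2) (max_le h3 h4)⟩
  have b1 := hx r1 hr1 (by linarith) (by linarith) (by linarith)
  have b2 := hx α1 a7 (by linarith) (by linarith) (by linarith)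
  have b3 := hx γ1 a5 (by linarith) (by linarith) (by linarith)
  have b4 := hx (α2 + γ1 - r2) (by linarith) (by linarith) (by linarith) (by linarith)
  obtain ⟨y, y0, y1, y2, hy⟩ : ∃ y, 0 ≤ y ∧ r1 + r2 - Δ1 ≤ y ∧ x + r2 - γ1 ≤ y ∧
      ∀ z, 0 ≤ z → r1 + r2 - Δ1 ≤ z → x + r2 - γ1 ≤ z → y ≤ z :=
    ⟨max 0 (max (r1 + r2 - Δ1) (x + r2 - γ1)), by simp, by simp, by simp,
      fun z h1 h2 h3 => max_le h1 (max_le h2 h3)⟩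
  have c1 := hy r2 hr2 (by linarith) (by linarith)
  have c2 := hy α2 a8 (by linarith) (by linarith)
  have c3 := hy (γ2 + x - r1) (by linarith) (by linarith) (by linarith)
  exact ⟨x, y, x0, b1, y0, c1, Or.inr b2, Or.inr (Or.inr (by linarith)),
    Or.inr (Or.inr (by linarith)), Or.inr c2, Or.inr (Or.inr (by linarith)),
    Or.inr (Or.inr (by linarith))⟩

/-- Splitting `N` messages into `n0` common and `n1` private parts with `n1 ≈ 2 ^ x`. Rounding up costs
nothing because the numbers of wrong candidates are `n1 - 1`, `n0 - 1` and `(n0 - 1) * n1`. -/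
theorem exists_factor {N : ℕ} (hN : 0 < N) (x : ℝ) :
    ∃ n0 n1 : ℕ, 0 < n0 ∧ 0 < n1 ∧ N ≤ n0 * n1 ∧ (n1 : ℝ) - 1 ≤ 2 ^ x ∧
      (n0 : ℝ) - 1 ≤ 2 ^ (Real.logb 2 N - x) ∧ ((n0 : ℝ) - 1) * n1 ≤ 2 ^ (Real.logb 2 N) ∧
      (x = 0 → n1 = 1) ∧ (x = Real.logb 2 N → n0 = 1) := by
  have hN' : (0 : ℝ) < N := by exact_mod_cast hN
  have e : (2 : ℝ) ^ Real.logb 2 N = N := Real.rpow_logb (by norm_num) (by norm_num) hN'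
  have h1x : (0 : ℝ) < 2 ^ x := by positivity
  set n1 := ⌈(2 : ℝ) ^ x⌉₊ with hn1
  have n1pos : 0 < n1 := Nat.ceil_pos.2 h1x
  have n1' : (0 : ℝ) < n1 := by exact_mod_cast n1pos
  have l1 : (2 : ℝ) ^ x ≤ n1 := Nat.le_ceil _
  have u1 := Nat.ceil_lt_add_one h1x.le
  set n0 := ⌈(N : ℝ) / n1⌉₊ with hn0
  have l0 : (N : ℝ) / n1 ≤ n0 := Nat.le_ceil _
  have u0 := Nat.ceil_lt_add_one (show (0 : ℝ) ≤ (N : ℝ) / n1 by positivity)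
  rw [← hn1] at u1
  rw [← hn0] at u0
  refine ⟨n0, n1, Nat.ceil_pos.2 (by positivity), n1pos, ?_, by linarith, ?_, ?_, ?_, ?_⟩
  · rw [div_le_iff₀ n1'] at l0; exact_mod_cast l0
  · rw [Real.rpow_sub two_pos, e]
    have : (N : ℝ) / n1 ≤ N / 2 ^ x := div_le_div_of_nonneg_left hN'.le h1x l1
    linarith
  · rw [e, ← le_div_iff₀ n1']; linarith
  · intro h; rw [hn1, h]; simp
  · intro h
    have : n1 = N := by rw [hn1, h, e]; simp
    rw [hn0, this, div_self hN'.ne']; simp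

/-- Each of the four error classes contributes at most `2 ^ (-s)`. -/
theorem confTotal_le {n0 n1 m0 : ℕ} (hn0 : 0 < n0) (hn1 : 0 < n1) (hm0 : 0 < m0)
    {x r r2 y s : ℝ}
    (h1 : (n1 : ℝ) - 1 ≤ 2 ^ x) (h2 : ((n0 : ℝ) - 1) * n1 ≤ 2 ^ r)
    (h3 : (m0 : ℝ) - 1 ≤ 2 ^ (r2 - y)) (e1 : x = 0 → n1 = 1) (e2 : x = r → n0 = 1)
    (e3 : y = r2 → m0 = 1) (v : Bool × Bool → ℝ)
    (tt : x = 0 ∨ x ≤ v (true, true) - s) (tf : x = 0 ∨ y = r2 ∨ x + (r2 - y) ≤ v (true, false) - s)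
    (ft : r ≤ v (false, true) - s) (ff : x = r ∨ y = r2 ∨ r + (r2 - y) ≤ v (false, false) - s) :
    confTotal n0 n1 m0 v ≤ 4 * 2 ^ (-s) := by
  have key : ∀ a b c : ℝ, 0 ≤ a → a ≤ 2 ^ b → b ≤ c - s → a * 2 ^ (-c) ≤ (2 : ℝ) ^ (-s) := by
    intro a b c h0 h h'
    refine (mul_le_mul_of_nonneg_right h (by positivity)).trans ?_
    rw [← Real.rpow_add two_pos]
    exact Real.rpow_le_rpow_of_exponent_le one_le_two (by linarith)
  have z : (0 : ℝ) ≤ 2 ^ (-s) := by positivity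
  have p0 : (0 : ℝ) ≤ n0 - 1 := by
    have : (1 : ℝ) ≤ n0 := by exact_mod_cast hn0
    linarith
  have p1 : (0 : ℝ) ≤ n1 - 1 := by
    have : (1 : ℝ) ≤ n1 := by exact_mod_cast hn1
    linarith
  have p2 : (0 : ℝ) ≤ m0 - 1 := by
    have : (1 : ℝ) ≤ m0 := by exact_mod_cast hm0
    linarith
  have q1 : (0 : ℝ) ≤ (n0 - 1) * n1 := by positivity
  have t1 : ((n1 : ℝ) - 1) * 2 ^ (-v (true, true)) ≤ 2 ^ (-s) := by
    rcases tt with h | h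
    · rw [e1 h]; simpa using z
    · exact key _ _ _ p1 h1 h
  have t2 : ((n1 : ℝ) - 1) * (m0 - 1) * 2 ^ (-v (true, false)) ≤ 2 ^ (-s) := by
    rcases tf with h | h | h
    · rw [e1 h]; simpa using z
    · rw [e3 h]; simpa using z
    · refine key _ _ _ (by positivity) ?_ h
      rw [Real.rpow_add two_pos]
      gcongr
  have t3 : ((n0 : ℝ) - 1) * n1 * 2 ^ (-v (false, true)) ≤ 2 ^ (-s) := key _ _ _ q1 h2 ft
  have t4 : ((n0 : ℝ) - 1) * n1 * (m0 - 1) * 2 ^ (-v (false, false)) ≤ 2 ^ (-s) := by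
    rcases ff with h | h | h
    · rw [e2 h]; simpa using z
    · rw [e3 h]; simpa using z
    · refine key _ _ _ (by positivity) ?_ h
      rw [Real.rpow_add two_pos]
      gcongr
  rw [confTotal]
  linarith

/-- Sizes of the four message parts for which both receivers' union bounds are at most `4 * 2 ^ (-s)`. -/
theorem exists_sizes {N1 N2 : ℕ} (hN1 : 0 < N1) (hN2 : 0 < N2) {s : ℝ} (hs : 0 ≤ s)
    (v w : Bool × Bool → ℝ)
    (h1 : Real.logb 2 N1 ≤ v (false, true) - 3 * s)
    (h2 : Real.logb 2 N1 ≤ v (true, true) + w (true, false) - 3 * s)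
    (h3 : Real.logb 2 N2 ≤ w (false, true) - 3 * s)
    (h4 : Real.logb 2 N2 ≤ w (true, true) + v (true, false) - 3 * s)
    (h5 : Real.logb 2 N1 + Real.logb 2 N2 ≤ v (false, false) + w (true, true) - 3 * s)
    (h6 : Real.logb 2 N1 + Real.logb 2 N2 ≤ w (false, false) + v (true, true) - 3 * s)
    (h7 : Real.logb 2 N1 + Real.logb 2 N2 ≤ v (true, false) + w (true, false) - 3 * s)
    (h8 : 2 * Real.logb 2 N1 + Real.logb 2 N2 ≤
      v (false, false) + v (true, true) + w (true, false) - 3 * s)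
    (h9 : Real.logb 2 N1 + 2 * Real.logb 2 N2 ≤
      w (false, false) + w (true, true) + v (true, false) - 3 * s) :
    ∃ a b c d : ℕ, 0 < a ∧ 0 < b ∧ 0 < c ∧ 0 < d ∧ N1 ≤ a * b ∧ N2 ≤ c * d ∧
      confTotal a b c v ≤ 4 * 2 ^ (-s) ∧ confTotal c d a w ≤ 4 * 2 ^ (-s) := by
  have r1 : 0 ≤ Real.logb 2 N1 := Real.logb_nonneg one_lt_two (by exact_mod_cast hN1)
  have r2 : 0 ≤ Real.logb 2 N2 := Real.logb_nonneg one_lt_two (by exact_mod_cast hN2)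
  obtain ⟨x, y, h⟩ := exists_rateSplit (α1 := v (true, true) - s) (γ1 := v (true, false) - s)
    (Δ1 := v (false, false) - s) (α2 := w (true, true) - s) (γ2 := w (true, false) - s)
    (Δ2 := w (false, false) - s) r1 r2 (by linarith) (by linarith) (by linarith) (by linarith)
    (by linarith) (by linarith) (by linarith)
  obtain ⟨a, b, ha, hb, hab, b1, a1, ab, hb0, ha0⟩ := exists_factor hN1 x
  obtain ⟨c, d, hc, hd, hcd, d1, c1, cd, hd0, hc0⟩ := exists_factor hN2 y
  exact ⟨a, b, c, d, ha, hb, hc, hd, hab, hcd,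
    confTotal_le ha hb hc b1 ab c1 hb0 ha0 hc0 v h.tt1 h.tf1 (by linarith) h.ff1,
    confTotal_le hc hd ha d1 cd a1 hd0 hc0 ha0 w h.tt2 h.tf2 (by linarith) h.ff2⟩

end Rates

/-! ### Real exponents below extended-real ones -/

section Extended

/-- A real number strictly below `e`: the large number `M` if `e = ⊤`, and `e - 1/3` otherwise. For
`e = ⊥` the value is meaningless. -/
noncomputable def lowerReal (M : ℝ) (e : EReal) : ℝ := if e = ⊤ then M else e.toReal - 1 / 3

theorem lowerReal_lt (M : ℝ) {e : EReal} (h : e ≠ ⊥) : (lowerReal M e : EReal) < e := by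
  induction e with
  | bot => exact absurd rfl h
  | top => exact EReal.coe_lt_top _
  | coe x =>
    rw [lowerReal, if_neg (EReal.coe_ne_top x), EReal.toReal_coe]
    exact_mod_cast (by linarith : x - 1 / 3 < x)

theorem ne_bot_of_rate {r L : ℝ} {a b c : EReal}
    (h : (r : EReal) ≤ a + b + c - ((2 : ℝ) : EReal) - (L : EReal)) : a ≠ ⊥ ∧ b ≠ ⊥ ∧ c ≠ ⊥ := by
  refine ⟨?_, ?_, ?_⟩ <;> rintro rfl <;> simp [sub_eq_add_neg] at h

/-- Passing from three extended reals to `lowerReal` costs at most `3 · 1/3 = 1`. If one of them is infinite,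
`M` outweighs the two others, which are at least `-B`. -/
theorem lowerReal_rate {r L M B : ℝ} {a b c : EReal} (hB : 0 ≤ B) (hM0 : 0 ≤ M)
    (hM : r + 2 * B + 1 + L ≤ M)
    (ha : |a.toReal| + 1 ≤ B) (hb : |b.toReal| + 1 ≤ B) (hc : |c.toReal| + 1 ≤ B)
    (h : (r : EReal) ≤ a + b + c - ((2 : ℝ) : EReal) - (L : EReal)) :
    r ≤ lowerReal M a + lowerReal M b + lowerReal M c - (1 + L) := by
  have lo : ∀ e : EReal, |e.toReal| + 1 ≤ B → -B ≤ lowerReal M e := by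
    intro e he
    rw [lowerReal]
    split_ifs
    · linarith
    · linarith [neg_abs_le e.toReal]
  have hi : ∀ e : EReal, e = ⊤ → lowerReal M e = M := by
    rintro e rfl; simp [lowerReal]
  have la := lo a ha
  have lb := lo b hb
  have lc := lo c hc
  obtain ⟨na, nb, nc⟩ := ne_bot_of_rate h
  by_cases ta : a = ⊤
  · rw [hi a ta]; linarith
  by_cases tb : b = ⊤
  · rw [hi b tb]; linarith
  by_cases tc : c = ⊤
  · rw [hi c tc]; linarith
  lift a to ℝ using ⟨ta, na⟩
  lift b to ℝ using ⟨tb, nb⟩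
  lift c to ℝ using ⟨tc, nc⟩
  simp only [lowerReal, if_neg ta, if_neg tb, if_neg tc, EReal.toReal_coe]
  norm_cast at h
  linarith

/-- Real exponents strictly below the eight information quantities that still satisfy the nine rate
conditions with margin `1 + L`. The letters `A, B, C, D` stand for the classes `tt, ft, tf, ff` at
receiver 1, and the primed ones for those at receiver 2. -/
theorem exists_exponents {R1 R2 L : ℝ} (hR1 : 0 ≤ R1) (hR2 : 0 ≤ R2) (hL : 0 ≤ L)
    {A B C D A' B' C' D' : EReal}
    (h1 : (R1 : EReal) ≤ B - ((2 : ℝ) : EReal) - (L : EReal))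
    (h2 : (R1 : EReal) ≤ A + C' - ((2 : ℝ) : EReal) - (L : EReal))
    (h3 : (R2 : EReal) ≤ B' - ((2 : ℝ) : EReal) - (L : EReal))
    (h4 : (R2 : EReal) ≤ A' + C - ((2 : ℝ) : EReal) - (L : EReal))
    (h5 : ((R1 + R2 : ℝ) : EReal) ≤ D + A' - ((2 : ℝ) : EReal) - (L : EReal))
    (h6 : ((R1 + R2 : ℝ) : EReal) ≤ D' + A - ((2 : ℝ) : EReal) - (L : EReal))
    (h7 : ((R1 + R2 : ℝ) : EReal) ≤ C + C' - ((2 : ℝ) : EReal) - (L : EReal))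
    (h8 : ((2 * R1 + R2 : ℝ) : EReal) ≤ D + A + C' - ((2 : ℝ) : EReal) - (L : EReal))
    (h9 : ((R1 + 2 * R2 : ℝ) : EReal) ≤ D' + A' + C - ((2 : ℝ) : EReal) - (L : EReal)) :
    ∃ a b c d a' b' c' d' : ℝ, ((a : EReal) < A ∧ (b : EReal) < B ∧ (c : EReal) < C ∧
      (d : EReal) < D) ∧ ((a' : EReal) < A' ∧ (b' : EReal) < B' ∧ (c' : EReal) < C' ∧
      (d' : EReal) < D') ∧ R1 ≤ b - (1 + L) ∧ R1 ≤ a + c' - (1 + L) ∧ R2 ≤ b' - (1 + L) ∧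
      R2 ≤ a' + c - (1 + L) ∧ R1 + R2 ≤ d + a' - (1 + L) ∧ R1 + R2 ≤ d' + a - (1 + L) ∧
      R1 + R2 ≤ c + c' - (1 + L) ∧ 2 * R1 + R2 ≤ d + a + c' - (1 + L) ∧
      R1 + 2 * R2 ≤ d' + a' + c - (1 + L) := by
  -- `M` is chosen so large that an infinite quantity makes its rate conditions hold automatically
  set K := |A.toReal| + |B.toReal| + |C.toReal| + |D.toReal| + |A'.toReal| + |B'.toReal|
    + |C'.toReal| + |D'.toReal| + 1 with hK
  have pA := abs_nonneg A.toReal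
  have pB := abs_nonneg B.toReal
  have pC := abs_nonneg C.toReal
  have pD := abs_nonneg D.toReal
  have pA' := abs_nonneg A'.toReal
  have pB' := abs_nonneg B'.toReal
  have pC' := abs_nonneg C'.toReal
  have pD' := abs_nonneg D'.toReal
  have K0 : 0 ≤ K := by linarith
  have K1 : |(0 : EReal).toReal| + 1 ≤ K := by simp; linarith
  set M := 2 * R1 + 2 * R2 + 2 * K + 1 + L with hM
  have M0 : 0 ≤ M := by linarith
  have z1 : lowerReal M 0 = -(1 / 3) := by simp [lowerReal]
  -- pad the shorter sums with `0`, so that `lowerReal_rate` applies to all nine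
  rw [← add_zero B, ← add_zero (B + 0)] at h1
  rw [← add_zero B', ← add_zero (B' + 0)] at h3
  rw [← add_zero (A + C')] at h2
  rw [← add_zero (A' + C)] at h4
  rw [← add_zero (D + A')] at h5
  rw [← add_zero (D' + A)] at h6
  rw [← add_zero (C + C')] at h7
  have key := fun {r : ℝ} {a b c : EReal} hr ha hb hc h =>
    lowerReal_rate (M := M) (r := r) (L := L) (a := a) (b := b) (c := c) K0 M0 hr ha hb hc h
  have g1 := key (by linarith) (by linarith) K1 K1 h1
  have g2 := key (by linarith) (by linarith) (by linarith) K1 h2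
  have g3 := key (by linarith) (by linarith) K1 K1 h3
  have g4 := key (by linarith) (by linarith) (by linarith) K1 h4
  have g5 := key (by linarith) (by linarith) (by linarith) K1 h5
  have g6 := key (by linarith) (by linarith) (by linarith) K1 h6
  have g7 := key (by linarith) (by linarith) (by linarith) K1 h7
  have g8 := key (by linarith) (by linarith) (by linarith) (by linarith) h8
  have g9 := key (by linarith) (by linarith) (by linarith) (by linarith) h9
  rw [z1] at g1 g2 g3 g4 g5 g6 g7
  exact ⟨lowerReal M A, lowerReal M B, lowerReal M C, lowerReal M D, lowerReal M A',
    lowerReal M B', lowerReal M C', lowerReal M D',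
    ⟨lowerReal_lt M (ne_bot_of_rate h2).1, lowerReal_lt M (ne_bot_of_rate h1).1,
     lowerReal_lt M (ne_bot_of_rate h4).2.1, lowerReal_lt M (ne_bot_of_rate h5).1⟩,
    ⟨lowerReal_lt M (ne_bot_of_rate h4).1, lowerReal_lt M (ne_bot_of_rate h3).1,
     lowerReal_lt M (ne_bot_of_rate h2).2.1, lowerReal_lt M (ne_bot_of_rate h6).1⟩,
    by linarith, by linarith, by linarith, by linarith, by linarith, by linarith, by linarith,
    by linarith, by linarith⟩

end Extended

/-! ### From averages to a single code -/

section Assembly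
open Matrix

theorem hsPair_trR {n m : Type*} [Fintype n] [DecidableEq n] [Fintype m] [DecidableEq m]
    (M : Matrix n n ℂ) (ρ : Matrix (n × m) (n × m) ℂ) :
    hsPair M (trR ρ) = hsPair (M ⊗ₖ (1 : Matrix m m ℂ)) ρ := by
  rw [hsPair, hsPair]
  congr 1
  simp only [Matrix.trace, Matrix.diag, Matrix.mul_apply, Fintype.sum_prod_type, trR, of_apply,
    kroneckerMap_apply, Matrix.one_apply, Finset.mul_sum]
  refine Finset.sum_congr rfl fun i _ => ?_
  rw [Finset.sum_comm]
  simp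

theorem hsPair_trL {n m : Type*} [Fintype n] [DecidableEq n] [Fintype m] [DecidableEq m]
    (M : Matrix m m ℂ) (ρ : Matrix (n × m) (n × m) ℂ) :
    hsPair M (trL ρ) = hsPair ((1 : Matrix n n ℂ) ⊗ₖ M) ρ := by
  rw [hsPair, hsPair]
  congr 1
  simp only [Matrix.trace, Matrix.diag, Matrix.mul_apply, Fintype.sum_prod_type, trL, of_apply,
    kroneckerMap_apply, Matrix.one_apply, Finset.mul_sum]
  simp only [ite_mul, one_mul, zero_mul, Finset.sum_ite_irrel, Finset.sum_const_zero,
    Finset.sum_ite_eq, Finset.mem_univ, if_true]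
  refine (Finset.sum_congr rfl fun i _ => Finset.sum_comm).trans Finset.sum_comm

theorem trR_nonneg {n m : Type*} [Fintype n] [Fintype m] {ρ : Matrix (n × m) (n × m) ℂ}
    (h : ρ.PosSemidef) : 0 ≤ trR ρ := by
  have : trR ρ = ∑ b, ρ.submatrix (fun a => (a, b)) (fun a => (a, b)) := by
    ext i j; simp [trR, Matrix.sum_apply]
  rw [this]
  exact Finset.sum_nonneg fun b _ => nonneg_iff_posSemidef.2 (h.submatrix _)

theorem trL_nonneg {n m : Type*} [Fintype n] [Fintype m] {ρ : Matrix (n × m) (n × m) ℂ}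
    (h : ρ.PosSemidef) : 0 ≤ trL ρ := by
  have : trL ρ = ∑ b, ρ.submatrix (fun a => (b, a)) (fun a => (b, a)) := by
    ext i j; simp [trL, Matrix.sum_apply]
  rw [this]
  exact Finset.sum_nonneg fun b _ => nonneg_iff_posSemidef.2 (h.submatrix _)

theorem trace_trR {n m : Type*} [Fintype n] [Fintype m] (ρ : Matrix (n × m) (n × m) ℂ) :
    (trR ρ).trace = ρ.trace := by
  simp [trR, Matrix.trace, Fintype.sum_prod_type]

theorem trace_trL {n m : Type*} [Fintype n] [Fintype m] (ρ : Matrix (n × m) (n × m) ℂ) :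
    (trL ρ).trace = ρ.trace := by
  simp only [trL, Matrix.trace, Fintype.sum_prod_type, diag, of_apply]
  exact Finset.sum_comm

/-- Both receivers succeed with probability at least one minus the sum of their failure probabilities;
this is `0 ≤ Tr[(1 - M) ⊗ (1 - M') ρ]`. -/
theorem product_success {n m : Type*} [Fintype n] [DecidableEq n] [Fintype m] [DecidableEq m]
    {M : Matrix n n ℂ} {M' : Matrix m m ℂ} (hM : M ≤ 1) (hM' : M' ≤ 1)
    {ρ : Matrix (n × m) (n × m) ℂ} (hρ : IsDensity ρ) :
    1 - hsPair (1 - M) (trR ρ) - hsPair (1 - M') (trL ρ) ≤ (((M ⊗ₖ M') * ρ).trace).re := by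
  have h1 : hsPair (1 : Matrix (n × m) (n × m) ℂ) ρ = 1 := by
    rw [hsPair, Matrix.one_mul, hρ.2]; simp
  have e : (1 - M) ⊗ₖ (1 - M') = 1 - (M ⊗ₖ (1 : Matrix m m ℂ)) - ((1 : Matrix n n ℂ) ⊗ₖ M')
      + M ⊗ₖ M' := by
    rw [← Matrix.one_kronecker_one (m := n) (n := m)]
    ext i j
    simp only [kroneckerMap_apply, Matrix.sub_apply, Matrix.add_apply]
    ring
  have h0 : 0 ≤ hsPair ((1 - M) ⊗ₖ (1 - M')) ρ :=
    hsPair_nonneg (nonneg_iff_posSemidef.2 ((Matrix.le_iff.1 hM).kronecker (Matrix.le_iff.1 hM')))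
      (nonneg_iff_posSemidef.2 hρ.1)
  rw [e, hsPair_add, hsPair_sub, hsPair_sub, h1] at h0
  have t1 : hsPair (1 - M) (trR ρ) = 1 - hsPair (M ⊗ₖ (1 : Matrix m m ℂ)) ρ := by
    rw [hsPair_sub, hsPair_trR, hsPair_trR, one_kronecker_one, h1]
  have t2 : hsPair (1 - M') (trL ρ) = 1 - hsPair ((1 : Matrix n n ℂ) ⊗ₖ M') ρ := by
    rw [hsPair_sub, hsPair_trL, hsPair_trL, one_kronecker_one, h1]
  rw [t1, t2]
  change _ ≤ hsPair (M ⊗ₖ M') ρ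
  linarith

/-- Some choice of `q` and of the codebooks does at least as well as the average. -/
theorem exists_le_average {Qt G1 G2 : Type*} [Fintype Qt] [Fintype G1] [Fintype G2]
    {pQ : Qt → ℝ} {μ1 : Qt → G1 → ℝ} {μ2 : Qt → G2 → ℝ} (h0 : ∀ q, 0 ≤ pQ q)
    (h1 : ∑ q, pQ q = 1) (a0 : ∀ q g, 0 ≤ μ1 q g) (a1 : ∀ q, ∑ g, μ1 q g = 1)
    (b0 : ∀ q g, 0 ≤ μ2 q g) (b1 : ∀ q, ∑ g, μ2 q g = 1) {F : Qt → G1 → G2 → ℝ} {T : ℝ}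
    (h : ∑ q, pQ q * avg2 (μ1 q) (μ2 q) (F q) ≤ T) : ∃ q g1 g2, F q g1 g2 ≤ T := by
  by_contra! hc
  have hne : Nonempty Qt := by
    by_contra hn
    have := not_nonempty_iff.1 hn
    simp at h1
  have hne1 : Nonempty G1 := by
    by_contra hn
    have := not_nonempty_iff.1 hn
    have := a1 (Classical.choice hne)
    simp at this
  have hne2 : Nonempty G2 := by
    by_contra hn
    have := not_nonempty_iff.1 hn
    have := b1 (Classical.choice hne)
    simp at this
  obtain ⟨z, hz⟩ := Finite.exists_min fun z : Qt × G1 × G2 => F z.1 z.2.1 z.2.2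
  have hm : ∑ q, pQ q * F z.1 z.2.1 z.2.2 ≤ ∑ q, pQ q * avg2 (μ1 q) (μ2 q) (F q) :=
    Finset.sum_le_sum fun q _ => mul_le_mul_of_nonneg_left (by
      conv_lhs => rw [← avg2_const (μ1 q) (μ2 q) (a1 q) (b1 q) (F z.1 z.2.1 z.2.2)]
      exact avg2_mono _ _ (a0 q) (b0 q) fun a b => hz (q, a, b)) (h0 q)
  rw [← Finset.sum_mul, h1, one_mul] at hm
  linarith [hc z.1 z.2.1 z.2.2]

theorem avg2_swap {G1 G2 : Type*} [Fintype G1] [Fintype G2] (μ1 : G1 → ℝ) (μ2 : G2 → ℝ)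
    (F : G1 → G2 → ℝ) : avg2 μ2 μ1 (fun g2 g1 => F g1 g2) = avg2 μ1 μ2 F := by
  simp only [avg2]
  rw [Finset.sum_comm]
  exact Finset.sum_congr rfl fun _ _ => Finset.sum_congr rfl fun _ _ => by ring

theorem sum_embedding_le {ι κ n : Type*} [Fintype ι] [Fintype κ] [Fintype n] [DecidableEq n]
    (e : ι ↪ κ) {M : κ → Matrix n n ℂ} (h0 : ∀ k, 0 ≤ M k) (h1 : ∑ k, M k ≤ 1) :
    ∑ i, M (e i) ≤ 1 := by
  refine le_trans ?_ h1
  rw [← Finset.sum_map Finset.univ e]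
  exact Finset.sum_le_univ_sum_of_nonneg h0

/-- The parameters `δ² = θ³` and `K = 1 / θ` with `θ = ε^(1/6)` balance all error terms to `O(θ)`. -/
theorem error_budget {ε s : ℝ} (hε0 : 0 < ε) (hε1 : ε < 1)
    (hs : 3 * s = 1 + Real.logb 2 (1 / ε)) : ∃ δ K : ℝ, 0 < δ ∧ δ ≤ 1 ∧ 0 < K ∧ ∀ t,
      t ≤ 4 * (2 : ℝ) ^ (-s) → (6 * δ ^ 2 + 48 / K) + (2048 / δ ^ 2) * (4 * ε) + (64 * K) * t ≤
        2 ^ 14 * ε ^ ((1 : ℝ) / 6) := by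
  set θ := ε ^ ((1 : ℝ) / 6) with hθ
  have θ0 : 0 < θ := Real.rpow_pos_of_pos hε0 _
  have θ1 : θ ≤ 1 := Real.rpow_le_one hε0.le hε1.le (by norm_num)
  have e6 : θ ^ 6 = ε := by
    rw [hθ, ← Real.rpow_natCast, ← Real.rpow_mul hε0.le]; norm_num
  have es : (2 : ℝ) ^ (-s) ≤ θ ^ 2 := by
    have h3 : ((2 : ℝ) ^ (-s)) ^ 3 = ε / 2 := by
      rw [← Real.rpow_natCast, ← Real.rpow_mul two_pos.le]
      have : -s * ((3 : ℕ) : ℝ) = Real.logb 2 ε - 1 := by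
        rw [one_div, Real.logb_inv] at hs
        push_cast; linarith
      rw [this, Real.rpow_sub two_pos, Real.rpow_logb two_pos (by norm_num) hε0, Real.rpow_one]
    refine le_of_pow_le_pow_left₀ (n := 3) (by norm_num) (by positivity) ?_
    rw [h3, ← pow_mul, e6]
    linarith
  refine ⟨Real.sqrt (θ ^ 3), θ⁻¹, by positivity, ?_, by positivity, fun t ht => ?_⟩
  · rw [Real.sqrt_le_one]
    exact pow_le_one₀ θ0.le θ1
  rw [Real.sq_sqrt (by positivity), div_inv_eq_mul, ← e6]
  have a1 : 2048 / θ ^ 3 * (4 * θ ^ 6) = 8192 * θ ^ 3 := by field_simp; norm_num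
  have a2 : 64 * θ⁻¹ * t ≤ 256 * θ := by
    rw [mul_assoc, inv_mul_eq_div]
    have : t / θ ≤ 4 * θ := by
      rw [div_le_iff₀ θ0]
      nlinarith
    linarith
  have a3 : θ ^ 3 ≤ θ := by
    simpa using pow_le_pow_of_le_one θ0.le θ1 (show 1 ≤ 3 by norm_num)
  rw [a1]
  linarith

end Assembly

/-! ### The code built from eight families of tests -/

section Main
open Matrix

/-- Eight families of tests (four for each receiver) and sizes of the message parts with small union bounds
give an interference-channel code. -/
theorem code_of_tests {ε : ℝ} (hε0 : 0 < ε) (hε1 : ε < 1)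
    {pQ : Qt → ℝ} {p1 : Qt → U1 × X1 → ℝ} {p2 : Qt → U2 × X2 → ℝ}
    (hpQ : IsProbDist pQ) (hp1 : ∀ q, IsProbDist (p1 q)) (hp2 : ∀ q, IsProbDist (p2 q))
    {ρ : X1 × X2 → Matrix (Fin d1 × Fin d2) (Fin d1 × Fin d2) ℂ}
    (hρ : ∀ x, IsDensity (ρ x)) {N1 N2 : ℕ} (hN1 : 0 < N1) (hN2 : 0 < N2)
    {s : ℝ} (hs : 3 * s = 1 + Real.logb 2 (1 / ε)) {v w : Bool × Bool → ℝ}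
    (hv : ∀ S, HasTest ε pQ p1 p2 (fun x1 x2 => trR (ρ (x1, x2))) S (v S))
    (hw : ∀ S, HasTest ε pQ p2 p1 (fun x2 x1 => trL (ρ (x1, x2))) S (w S))
    {a b c d : ℕ} (hab : N1 ≤ a * b) (hcd : N2 ≤ c * d)
    (hv' : confTotal a b c v ≤ 4 * 2 ^ (-s)) (hw' : confTotal c d a w ≤ 4 * 2 ^ (-s)) :
    ExistsICCode ρ N1 N2 (2 ^ 15 * ε ^ ((1 : ℝ) / 6)) := by
  obtain ⟨δ, K, hδ0, hδ1, hK, hbudget⟩ := error_budget hε0 hε1 hs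
  choose μ1 hμ1 using fun q => exists_superCode (A := Fin a) (B := Fin b) (p1 q) (hp1 q).1 (hp1 q).2
  choose μ2 hμ2 using fun q => exists_superCode (A := Fin c) (B := Fin d) (p2 q) (hp2 q).1 (hp2 q).2
  have tr1 : ∀ x y, (trR (ρ (x, y))).trace = 1 := fun x y => by rw [trace_trR]; exact (hρ _).2
  have tr2 : ∀ x y, (trL (ρ (x, y))).trace = 1 := fun x y => by rw [trace_trL]; exact (hρ _).2
  obtain ⟨L, hL0, hL1, hL⟩ := receiver_total hpQ.1 hpQ.2 (fun x y => trR_nonneg (hρ (x, y)).1) tr1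
    μ1 μ2 _ _ _ _ hμ1 hμ2 v hv δ hδ0 hδ1 K hK
  obtain ⟨M, hM0, hM1, hM⟩ := receiver_total hpQ.1 hpQ.2 (fun y x => trL_nonneg (hρ (x, y)).1)
    (fun y x => tr2 x y) μ2 μ1 _ _ _ _ hμ2 hμ1 w hw δ hδ0 hδ1 K hK
  simp only [Fintype.card_fin] at hL hM
  replace hL := fun i j k l => (hL i j k l).trans (hbudget _ hv')
  replace hM := fun i j k l => (hM i j k l).trans (hbudget _ hw')
  set θ := ε ^ ((1 : ℝ) / 6) with hθ
  -- the messages are embedded into the pairs (common part, private part)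
  obtain ⟨e1⟩ : Nonempty (Fin N1 ↪ Fin a × Fin b) :=
    Function.Embedding.nonempty_of_card_le (by simpa using hab)
  obtain ⟨e2⟩ : Nonempty (Fin N2 ↪ Fin c × Fin d) :=
    Function.Embedding.nonempty_of_card_le (by simpa using hcd)
  set F1 : Qt → (Fin a → U1 × (Fin b → X1)) → (Fin c → U2 × (Fin d → X2)) →
      Fin N1 × Fin N2 → ℝ := fun q g1 g2 m => hsPair (1 - L q g1 g2 (e1 m.1))
        (trR (ρ ((g1 (e1 m.1).1).2 (e1 m.1).2, (g2 (e2 m.2).1).2 (e2 m.2).2))) with hF1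
  set F2 : Qt → (Fin a → U1 × (Fin b → X1)) → (Fin c → U2 × (Fin d → X2)) →
      Fin N1 × Fin N2 → ℝ := fun q g1 g2 m => hsPair (1 - M q g2 g1 (e2 m.2))
        (trL (ρ ((g1 (e1 m.1).1).2 (e1 m.1).2, (g2 (e2 m.2).1).2 (e2 m.2).2))) with hF2
  have n1 : (0 : ℝ) < N1 := by exact_mod_cast hN1
  have n2 : (0 : ℝ) < N2 := by exact_mod_cast hN2
  have havg : ∑ q, pQ q * avg2 (μ1 q) (μ2 q)
      (fun g1 g2 => ((N1 * N2 : ℝ))⁻¹ * ∑ m, (F1 q g1 g2 m + F2 q g1 g2 m)) ≤ 2 ^ 15 * θ := by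
    have t1 : ∀ m, ∑ q, pQ q * avg2 (μ1 q) (μ2 q) (fun g1 g2 => F1 q g1 g2 m) ≤ 2 ^ 14 * θ :=
      fun m => hL _ _ _ _
    have t2 : ∀ m, ∑ q, pQ q * avg2 (μ1 q) (μ2 q) (fun g1 g2 => F2 q g1 g2 m) ≤ 2 ^ 14 * θ :=
      fun m => by
        have := hM (e2 m.2).1 (e2 m.2).2 (e1 m.1).1 (e1 m.1).2
        refine le_trans (le_of_eq ?_) this
        exact Finset.sum_congr rfl fun q _ => by rw [← avg2_swap]
    simp only [avg2_mul, avg2_sum, avg2_add]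
    have e : ∑ q, pQ q * ((N1 * N2 : ℝ)⁻¹ * ∑ m, (avg2 (μ1 q) (μ2 q) (fun g1 g2 => F1 q g1 g2 m) +
        avg2 (μ1 q) (μ2 q) (fun g1 g2 => F2 q g1 g2 m))) = (N1 * N2 : ℝ)⁻¹ * ∑ m,
        (∑ q, pQ q * avg2 (μ1 q) (μ2 q) (fun g1 g2 => F1 q g1 g2 m) +
          ∑ q, pQ q * avg2 (μ1 q) (μ2 q) (fun g1 g2 => F2 q g1 g2 m)) := by
      simp only [← Finset.sum_add_distrib, ← mul_add]
      rw [Finset.sum_comm, Finset.mul_sum]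
      refine Finset.sum_congr rfl fun q _ => ?_
      rw [← Finset.mul_sum]; ring
    rw [e]
    refine (mul_le_mul_of_nonneg_left (Finset.sum_le_sum fun m _ => add_le_add (t1 m) (t2 m))
      (by positivity)).trans (le_of_eq ?_)
    rw [Finset.sum_const, Finset.card_univ, Fintype.card_prod, Fintype.card_fin, Fintype.card_fin,
      nsmul_eq_mul]
    push_cast
    field_simp
    ring
  obtain ⟨q, g1, g2, hg⟩ := exists_le_average hpQ.1 hpQ.2 (fun q => (hμ1 q).nonneg)
    (fun q => (hμ1 q).total) (fun q => (hμ2 q).nonneg) (fun q => (hμ2 q).total) havg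
  have sL := sum_embedding_le e1 (hL0 q g1 g2) (hL1 q g1 g2)
  have sM := sum_embedding_le e2 (hM0 q g2 g1) (hM1 q g2 g1)
  refine ⟨fun m => (g1 (e1 m).1).2 (e1 m).2, fun m => (g2 (e2 m).1).2 (e2 m).2,
    fun m => L q g1 g2 (e1 m), fun m => M q g2 g1 (e2 m),
    fun m => nonneg_iff_posSemidef.1 (hL0 _ _ _ _), Matrix.le_iff.1 sL,
    fun m => nonneg_iff_posSemidef.1 (hM0 _ _ _ _), Matrix.le_iff.1 sM, ?_⟩
  have l1 : ∀ m, L q g1 g2 (e1 m) ≤ 1 := fun m =>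
    (Finset.single_le_sum (f := fun m => L q g1 g2 (e1 m)) (fun i _ => hL0 q g1 g2 (e1 i))
      (Finset.mem_univ m)).trans sL
  have m1 : ∀ m, M q g2 g1 (e2 m) ≤ 1 := fun m =>
    (Finset.single_le_sum (f := fun m => M q g2 g1 (e2 m)) (fun i _ => hM0 q g2 g1 (e2 i))
      (Finset.mem_univ m)).trans sM
  have hs1 : ∀ m : Fin N1 × Fin N2, 1 - F1 q g1 g2 m - F2 q g1 g2 m ≤
      (((L q g1 g2 (e1 m.1) ⊗ₖ M q g2 g1 (e2 m.2)) *
        ρ ((g1 (e1 m.1).1).2 (e1 m.1).2, (g2 (e2 m.2).1).2 (e2 m.2).2)).trace).re :=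
    fun m => product_success (l1 m.1) (m1 m.2) (hρ _)
  have e : ((N1 * N2 : ℝ))⁻¹ * ∑ m : Fin N1 × Fin N2, (1 - F1 q g1 g2 m - F2 q g1 g2 m) =
      1 - ((N1 * N2 : ℝ))⁻¹ * ∑ m, (F1 q g1 g2 m + F2 q g1 g2 m) := by
    simp only [sub_sub, Finset.sum_sub_distrib, mul_sub]
    congr 1
    rw [Finset.sum_const, Finset.card_univ, Fintype.card_prod, Fintype.card_fin, Fintype.card_fin,
      nsmul_eq_mul]
    push_cast
    field_simp
  refine le_trans ?_ (mul_le_mul_of_nonneg_left (Finset.sum_le_sum fun m _ => hs1 m)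
    (by positivity))
  rw [e]
  linarith

theorem ExistsICCode.mono {ρ : X1 × X2 → Matrix (Fin d1 × Fin d2) (Fin d1 × Fin d2) ℂ}
    {N1 N2 : ℕ} {δ δ' : ℝ} (h : ExistsICCode ρ N1 N2 δ) (hδ : δ ≤ δ') :
    ExistsICCode ρ N1 N2 δ' := by
  obtain ⟨E1, E2, L, M, h1, h2, h3, h4, h5⟩ := h
  exact ⟨E1, E2, L, M, h1, h2, h3, h4, by linarith⟩

end Main

end Coding

/-- One-shot Chong–Motani–Garg–El Gamal inner bound for the classical-quantum
interference channel. -/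
theorem cmge_inner_bound
    (ε : ℝ) (hε0 : 0 < ε) (hε1 : ε < 1)
    (pQ : Qt → ℝ) (p1 : Qt → U1 × X1 → ℝ) (p2 : Qt → U2 × X2 → ℝ)
    (hpQ : IsProbDist pQ) (hp1 : ∀ q, IsProbDist (p1 q)) (hp2 : ∀ q, IsProbDist (p2 q))
    (ρ : X1 × X2 → Matrix (Fin d1 × Fin d2) (Fin d1 × Fin d2) ℂ)
    (hρ : ∀ x, IsDensity (ρ x))
    (N1 N2 : ℕ) (hN1 : 0 < N1) (hN2 : 0 < N2)
    (h1 : ((Real.logb 2 N1 : ℝ) : EReal) ≤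
      IH_X1_Y1_U2Q ε pQ p1 p2 ρ - ((2 : ℝ) : EReal) -
        ((Real.logb 2 (1 / ε) : ℝ) : EReal))
    (h2 : ((Real.logb 2 N1 : ℝ) : EReal) ≤
      IH_X1_Y1_U1U2Q ε pQ p1 p2 ρ + IH_X2U1_Y2_U2Q ε pQ p1 p2 ρ -
        ((2 : ℝ) : EReal) - ((Real.logb 2 (1 / ε) : ℝ) : EReal))
    (h3 : ((Real.logb 2 N2 : ℝ) : EReal) ≤
      IH_X2_Y2_U1Q ε pQ p1 p2 ρ - ((2 : ℝ) : EReal) -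
        ((Real.logb 2 (1 / ε) : ℝ) : EReal))
    (h4 : ((Real.logb 2 N2 : ℝ) : EReal) ≤
      IH_X2_Y2_U1U2Q ε pQ p1 p2 ρ + IH_X1U2_Y1_U1Q ε pQ p1 p2 ρ -
        ((2 : ℝ) : EReal) - ((Real.logb 2 (1 / ε) : ℝ) : EReal))
    (h5 : ((Real.logb 2 N1 + Real.logb 2 N2 : ℝ) : EReal) ≤
      IH_X1U2_Y1_Q ε pQ p1 p2 ρ + IH_X2_Y2_U1U2Q ε pQ p1 p2 ρ -
        ((2 : ℝ) : EReal) - ((Real.logb 2 (1 / ε) : ℝ) : EReal))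
    (h6 : ((Real.logb 2 N1 + Real.logb 2 N2 : ℝ) : EReal) ≤
      IH_X2U1_Y2_Q ε pQ p1 p2 ρ + IH_X1_Y1_U1U2Q ε pQ p1 p2 ρ -
        ((2 : ℝ) : EReal) - ((Real.logb 2 (1 / ε) : ℝ) : EReal))
    (h7 : ((Real.logb 2 N1 + Real.logb 2 N2 : ℝ) : EReal) ≤
      IH_X1U2_Y1_U1Q ε pQ p1 p2 ρ + IH_X2U1_Y2_U2Q ε pQ p1 p2 ρ -
        ((2 : ℝ) : EReal) - ((Real.logb 2 (1 / ε) : ℝ) : EReal))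
    (h8 : ((2 * Real.logb 2 N1 + Real.logb 2 N2 : ℝ) : EReal) ≤
      IH_X1U2_Y1_Q ε pQ p1 p2 ρ + IH_X1_Y1_U1U2Q ε pQ p1 p2 ρ +
        IH_X2U1_Y2_U2Q ε pQ p1 p2 ρ -
        ((2 : ℝ) : EReal) - ((Real.logb 2 (1 / ε) : ℝ) : EReal))
    (h9 : ((Real.logb 2 N1 + 2 * Real.logb 2 N2 : ℝ) : EReal) ≤
      IH_X2U1_Y2_Q ε pQ p1 p2 ρ + IH_X2_Y2_U1U2Q ε pQ p1 p2 ρ +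
        IH_X1U2_Y1_U1Q ε pQ p1 p2 ρ -
        ((2 : ℝ) : EReal) - ((Real.logb 2 (1 / ε) : ℝ) : EReal)) :
    ExistsICCode ρ N1 N2 (2 ^ (2 ^ 14) * ε ^ ((1 : ℝ) / 6)) := by
  have hL : 0 ≤ Real.logb 2 (1 / ε) :=
    Real.logb_nonneg one_lt_two (by rw [le_div_iff₀ hε0]; linarith)
  have r1 : 0 ≤ Real.logb 2 (N1 : ℝ) := Real.logb_nonneg one_lt_two (by exact_mod_cast hN1)
  have r2 : 0 ≤ Real.logb 2 (N2 : ℝ) := Real.logb_nonneg one_lt_two (by exact_mod_cast hN2)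
  obtain ⟨a, b, c, d, a', b', c', d', ⟨ha, hb, hc, hd⟩, ⟨ha', hb', hc', hd'⟩, k1, k2, k3, k4, k5,
    k6, k7, k8, k9⟩ := exists_exponents r1 r2 hL h1 h2 h3 h4 h5 h6 h7 h8 h9
  obtain ⟨s, hs⟩ : ∃ s : ℝ, 3 * s = 1 + Real.logb 2 (1 / ε) :=
    ⟨(1 + Real.logb 2 (1 / ε)) / 3, by ring⟩
  set v : Bool × Bool → ℝ := fun S =>
    if S.1 then (if S.2 then a else c) else (if S.2 then b else d) with hv
  set w : Bool × Bool → ℝ := fun S =>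
    if S.1 then (if S.2 then a' else c') else (if S.2 then b' else d') with hw
  have tr1 : ∀ x y, (trR (ρ (x, y))).trace = 1 := fun x y => by rw [trace_trR]; exact (hρ _).2
  have tr2 : ∀ y x, (trL (ρ (x, y))).trace = 1 := fun y x => by rw [trace_trL]; exact (hρ _).2
  have s1 := fun q => (hp1 q).2
  have s2 := fun q => (hp2 q).2
  have tv : ∀ S, HasTest ε pQ p1 p2 (fun x1 x2 => trR (ρ (x1, x2))) S (v S) := by
    rintro ⟨_ | _, _ | _⟩
    · exact hasTest_ff hpQ.2 s1 s2 tr1 hd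
    · exact hasTest_ft hpQ.2 s1 s2 tr1 hb
    · exact hasTest_tf hpQ.2 s1 s2 tr1 hc
    · exact hasTest_tt hpQ.2 s1 s2 tr1 ha
  have tw : ∀ S, HasTest ε pQ p2 p1 (fun x2 x1 => trL (ρ (x1, x2))) S (w S) := by
    rintro ⟨_ | _, _ | _⟩
    · exact hasTest_ff hpQ.2 s2 s1 tr2 hd'
    · exact hasTest_ft hpQ.2 s2 s1 tr2 hb'
    · exact hasTest_tf hpQ.2 s2 s1 tr2 hc'
    · exact hasTest_tt' hpQ.2 s2 s1 tr2 ha'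
  -- the margin `1 + log₂ (1/ε)` is spent as a loss of `s` for each of at most three quantities
  rw [← hs] at k1 k2 k3 k4 k5 k6 k7 k8 k9
  obtain ⟨A, B, C, E, -, -, -, -, hAB, hCE, hA, hC⟩ :=
    exists_sizes hN1 hN2 (by linarith : 0 ≤ s) v w k1 k2 k3 k4 k5 k6 k7 k8 k9
  refine (code_of_tests hε0 hε1 hpQ hp1 hp2 hρ hN1 hN2 hs tv tw hAB hCE hA hC).mono ?_
  refine mul_le_mul_of_nonneg_right ?_ (Real.rpow_nonneg hε0.le _)
  exact pow_le_pow_right₀ one_le_two (by norm_num)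

end Interference
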